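/- arXiv:1905.06031 — 3 statements merged into one kernel-verified Lean document; each statement's English description precedes it below -/
import Mathlib

section
/- Let k ≥ 2. For any K_k-minor-free finite simple graph G of maximum degree Δ, the fractional strong chromatic index of G satisfies χ'₂,f(G) ≤ 2(k−1)(Δ+1). -/
/-!
The bound is the product of the constants `Δ + 1` of Vizing's theorem and `2 (k - 1)` of the
theorem of Reed and Seymour on the fractional chromatic number of graphs without a `K_k` minor.

By linear programming duality (`fracChrom_le`) it suffices to find, for every nonnegative
weighting of the edges of `G`, a stable set of `lineSq G` with at least a
`1 / (2 (k - 1) (Δ + 1))` fraction of the total weight.  Vizing's theorem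
(`exists_edge_colouring`, proved with fans and Kempe chains) gives a matching `M` with at least a
`1 / (Δ + 1)` fraction.  The subgraph of `lineSq G` induced by `M` arises from `G` by deleting
vertices and contracting the edges of `M`, so it has no `K_k` minor either
(`hasCliqueMinor_of_matching`), and the dual form of the theorem of Reed and Seymour
(`exists_stable_of_not_hasCliqueMinor`) produces the stable set inside `M`.

For that theorem, parts `P` are removed from the graph one after another.  Each part is a
connected subset of a component `D` of what remains, it touches all earlier parts with a
neighbour in `D`, and it contains a stable set `S` with `w(P) ≤ 2 w(S)`.  The parts seen by a
component, together with the new part, are pairwise touching, hence fewer than `k` in number, and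
the stable sets can be coloured greedily with `k - 1` colours so that every colour class of their
union is stable; one of the classes is heavy enough (`peel`).

The point is that a suitable part exists.  It is chosen to maximise `2 w(S) - w(P)`, and then the
number of vertices.  By maximality, if a connected set `X` in the rest of `D` is attached to `P`
and `U ⊆ X` is stable without neighbours in `P`, then `2 w(U) < w(X)`: otherwise `X` and `U`
could be added to `P` and `S` (`exists_maximal_connector`).  This property of the earlier parts
shows in turn that the maximum of `2 w(S) - w(P)` for the next part is nonnegative.  Consider an
inclusion-minimal connected set touching the required earlier parts and its dominator tree with
respect to some root.  By minimality every leaf of the tree is the only neighbour of some earlier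
part, and going up the tree a vertex is selected for `S` exactly when no adjacent child is
(`exists_cert`).
-/

/-- `G` contains a clique minor of order `k`: there are `k` pairwise disjoint nonempty
connected branch sets with an edge of `G` between every two of them. -/
def HasCliqueMinor {α : Type} (G : SimpleGraph α) (k : ℕ) : Prop :=
  ∃ S : Fin k → Set α,
    (∀ i, (G.induce (S i)).Connected) ∧
    (∀ i j, i ≠ j → Disjoint (S i) (S j)) ∧
    (∀ i j, i ≠ j → ∃ u ∈ S i, ∃ v ∈ S j, G.Adj u v)

/-- The fractional chromatic number of `H`: the least total weight of a nonnegative weight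
function on the stable sets of `H` such that every vertex receives total weight at least `1`
over the stable sets containing it. -/
noncomputable def fracChrom {α : Type} (H : SimpleGraph α) : ℝ :=
  sInf { c : ℝ | ∃ (n : ℕ) (I : Fin n → Set α) (w : Fin n → ℝ),
    (∀ i, 0 ≤ w i) ∧
    (∀ i, ∀ u ∈ I i, ∀ v ∈ I i, ¬ H.Adj u v) ∧
    (∀ v : α, 1 ≤ ∑ i, Set.indicator (I i) (fun _ => w i) v) ∧
    c = ∑ i, w i }

/-- The square of the line graph of `G`: vertices are the edges of `G`, two distinct edges
being adjacent when they are incident or joined by an edge of `G`.  The fractional strong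
chromatic index of `G` is the fractional chromatic number of this graph. -/
def lineSq {α : Type} (G : SimpleGraph α) : SimpleGraph G.edgeSet :=
  SimpleGraph.fromRel fun e f =>
    (∃ x, x ∈ (e : Sym2 α) ∧ x ∈ (f : Sym2 α)) ∨
    ∃ x y, x ∈ (e : Sym2 α) ∧ y ∈ (f : Sym2 α) ∧ G.Adj x y

/-! ### Connected and stable finite sets of vertices -/

/-- The finite vertex set `X` induces a (nonempty) connected subgraph of `G`. -/
def Conn {V : Type} (G : SimpleGraph V) (X : Finset V) : Prop :=
  (G.induce (X : Set V)).Connected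

/-- The finite vertex set `S` is stable in `G`. -/
def Stab {V : Type} (G : SimpleGraph V) (S : Finset V) : Prop :=
  ∀ u ∈ S, ∀ v ∈ S, ¬ G.Adj u v

section Connectivity

variable {V : Type} {G : SimpleGraph V} {X Y : Finset V}

lemma Conn.nonempty (h : Conn G X) : X.Nonempty := by
  obtain ⟨⟨x, hx⟩⟩ := SimpleGraph.Connected.nonempty h
  exact ⟨x, hx⟩

lemma Conn.reach (h : Conn G X) {a b : V} (ha : a ∈ X) (hb : b ∈ X) :
    Relation.ReflTransGen (fun u v => G.Adj u v ∧ v ∈ X) a b := by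
  have h1 := (SimpleGraph.reachable_iff_reflTransGen _ _).1
    (SimpleGraph.Connected.preconnected h ⟨a, ha⟩ ⟨b, hb⟩)
  exact h1.lift (fun x : (X : Set V) => (x : V)) (fun x y hxy => ⟨hxy, y.2⟩)

lemma conn_of_reach {r : V} (hr : r ∈ X)
    (h : ∀ b ∈ X, Relation.ReflTransGen (fun u v => G.Adj u v ∧ v ∈ X) r b) : Conn G X := by
  have key : ∀ b, Relation.ReflTransGen (fun u v => G.Adj u v ∧ v ∈ X) r b →
      ∃ hb : b ∈ X, (G.induce (X : Set V)).Reachable ⟨r, hr⟩ ⟨b, hb⟩ := by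
    intro b hb
    induction hb with
    | refl => exact ⟨hr, SimpleGraph.Reachable.refl _⟩
    | tail _ hbc ih =>
      obtain ⟨hb, h1⟩ := ih
      refine ⟨hbc.2, h1.trans (SimpleGraph.Adj.reachable ?_)⟩
      exact hbc.1
  have : Nonempty (X : Set V) := ⟨⟨r, hr⟩⟩
  refine SimpleGraph.Connected.mk ?_
  intro a b
  obtain ⟨_, h1⟩ := key a (h a a.2)
  obtain ⟨_, h2⟩ := key b (h b b.2)
  exact h1.symm.trans h2

lemma conn_singleton (x : V) : Conn G {x} := by
  refine conn_of_reach (Finset.mem_singleton_self x) ?_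
  intro b hb
  rw [Finset.mem_singleton.1 hb]

lemma Conn.union_adj [DecidableEq V] (hX : Conn G X) (hY : Conn G Y) {u v : V} (hu : u ∈ X)
    (hv : v ∈ Y) (huv : G.Adj u v) : Conn G (X ∪ Y) := by
  unfold Conn
  rw [Finset.coe_union]
  exact SimpleGraph.connected_induce_union hX.preconnected hY.preconnected hu hv huv

end Connectivity

/-! ### Dominators in a rooted connected graph -/

section Dominators

variable {V : Type} {G : SimpleGraph V} {P : Finset V} {r : V}

/-- The vertex `b` can be reached from the root `r` inside `P` without meeting `a`; in particular
`r ≠ a`. -/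
def Avoids (G : SimpleGraph V) (P : Finset V) (r a b : V) : Prop :=
  r ≠ a ∧ Relation.ReflTransGen (fun u v => G.Adj u v ∧ v ∈ P ∧ v ≠ a) r b

open Classical in
/-- The set of vertices of `P` dominated by `a`: every walk in `P` from the root `r` to them
passes through `a`. -/
noncomputable def Dom (G : SimpleGraph V) (P : Finset V) (r a : V) : Finset V :=
  P.filter fun b => ¬ Avoids G P r a b

lemma mem_Dom {a b : V} : b ∈ Dom G P r a ↔ b ∈ P ∧ ¬ Avoids G P r a b := by
  classical
  simp [Dom]

lemma Dom_subset (a : V) : Dom G P r a ⊆ P := fun _ h => (mem_Dom.1 h).1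

lemma Avoids.ne {a b : V} (h : Avoids G P r a b) : b ≠ a := by
  obtain ⟨h1, h2⟩ := h
  rcases Relation.ReflTransGen.cases_tail h2 with h3 | ⟨c, _, h3⟩
  · rw [h3]; exact h1
  · exact h3.2.2

lemma Avoids.step {a b c : V} (h : Avoids G P r a b) (hbc : G.Adj b c) (hc : c ∈ P)
    (hca : c ≠ a) : Avoids G P r a c :=
  ⟨h.1, h.2.tail ⟨hbc, hc, hca⟩⟩

lemma self_mem_Dom {a : V} (ha : a ∈ P) : a ∈ Dom G P r a :=
  mem_Dom.2 ⟨ha, fun h => h.ne rfl⟩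

lemma Dom_root : Dom G P r r = P := by
  ext b
  rw [mem_Dom]
  exact ⟨fun h => h.1, fun h => ⟨h, fun h' => h'.1 rfl⟩⟩

/-- Only `a` has neighbours outside the set it dominates. -/
lemma mem_Dom_of_adj {a b c : V} (hb : b ∈ Dom G P r a) (hba : b ≠ a) (hbc : G.Adj b c)
    (hc : c ∈ P) : c ∈ Dom G P r a := by
  rw [mem_Dom] at hb ⊢
  exact ⟨hc, fun h => hb.2 (h.step hbc.symm hb.1 hba)⟩

lemma Avoids.trans {a b y : V} (ha : ¬ Avoids G P r y a) (h : Avoids G P r y b) :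
    Avoids G P r a b := by
  obtain ⟨h1, h2⟩ := h
  induction h2 with
  | refl => exact ⟨fun h => ha (h ▸ ⟨h1, .refl⟩), .refl⟩
  | tail h3 h4 ih =>
    refine ih.step h4.1 h4.2.1 ?_
    intro h
    exact ha (h ▸ ⟨h1, h3.tail h4⟩)

lemma Dom_mono {a y : V} (ha : a ∈ Dom G P r y) : Dom G P r a ⊆ Dom G P r y := by
  intro b hb
  rw [mem_Dom] at ha hb ⊢
  exact ⟨hb.1, fun h => hb.2 (h.trans ha.2)⟩

/-- Induction along walks of `P` starting at the root. -/
lemma walk_induction (hP : Conn G P) (hr : r ∈ P) (p : V → Prop) (h0 : p r)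
    (hs : ∀ b c, b ∈ P → c ∈ P → G.Adj b c → p b → p c) {b : V} (hb : b ∈ P) : p b := by
  have h := hP.reach hr hb
  have : b ∈ P ∧ p b := by
    induction h with
    | refl => exact ⟨hr, h0⟩
    | tail h1 h2 ih =>
      obtain ⟨h3, h4⟩ := ih (by
        rcases Relation.ReflTransGen.cases_tail h1 with h3 | ⟨c, _, h3⟩
        · rw [h3]; exact hr
        · exact h3.2)
      exact ⟨h2.2, hs _ _ h3 h2.2 h2.1 h4⟩
  exact this.2

lemma not_mem_Dom_of_mem (hP : Conn G P) (hr : r ∈ P) {a y : V} (hy : y ∈ P)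
    (ha : a ∈ Dom G P r y) (hay : a ≠ y) : y ∉ Dom G P r a := by
  rw [mem_Dom] at ha ⊢
  rintro ⟨-, hn⟩
  refine hn ?_
  have := walk_induction hP hr (fun b => Avoids G P r y b ∨ Avoids G P r a y) ?_ ?_ hy
  · rcases this with h | h
    · exact absurd rfl h.ne
    · exact h
  · by_cases h : r = y
    · exact Or.inr (h ▸ ⟨fun h' => hay (h' ▸ h), .refl⟩)
    · exact Or.inl ⟨h, .refl⟩
  · rintro b c - hc hbc (h | h)
    · by_cases hcy : c = y
      · subst hcy
        exact Or.inr ((h.trans ha.2).step hbc hc (Ne.symm hay))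
      · exact Or.inl (h.step hbc hc hcy)
    · exact Or.inr h

lemma Dom_laminar (hP : Conn G P) (hr : r ∈ P) {a b c : V} (ha : a ∈ P) (hb : b ∈ P)
    (hca : c ∈ Dom G P r a) (hcb : c ∈ Dom G P r b) :
    a ∈ Dom G P r b ∨ b ∈ Dom G P r a := by
  by_contra hcon
  simp only [mem_Dom, ha, hb, true_and, not_or, not_not] at hcon hca hcb
  obtain ⟨h1, h2⟩ := hcon
  have := walk_induction hP hr (fun c => Avoids G P r a c ∨ Avoids G P r b c) ?_ ?_ hca.1
  · rcases this with h | h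
    · exact hca.2 h
    · exact hcb.2 h
  · exact Or.inl ⟨h2.1, .refl⟩
  · rintro u v - hv huv (h | h)
    · by_cases hva : v = a
      · exact Or.inr (hva ▸ h1)
      · exact Or.inl (h.step huv hv hva)
    · by_cases hvb : v = b
      · exact Or.inl (hvb ▸ h2)
      · exact Or.inr (h.step huv hv hvb)

lemma conn_Dom (hP : Conn G P) (hr : r ∈ P) {a : V} (ha : a ∈ P) : Conn G (Dom G P r a) := by
  refine conn_of_reach (self_mem_Dom ha) ?_
  intro b hb
  have := walk_induction hP hr (fun b => Avoids G P r a b ∨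
    Relation.ReflTransGen (fun u v => G.Adj u v ∧ v ∈ Dom G P r a) a b) ?_ ?_ (Dom_subset _ hb)
  · rcases this with h | h
    · exact absurd h (mem_Dom.1 hb).2
    · exact h
  · by_cases h : r = a
    · exact Or.inr (h ▸ .refl)
    · exact Or.inl ⟨h, .refl⟩
  · intro u v _ hv huv h
    by_cases hva : v = a
    · exact Or.inr (hva ▸ .refl)
    by_cases h' : Avoids G P r a v
    · exact Or.inl h'
    rcases h with h | h
    · exact Or.inl (h.step huv hv hva)
    · exact Or.inr (h.tail ⟨huv, mem_Dom.2 ⟨hv, h'⟩⟩)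

lemma exists_adj_Dom (hP : Conn G P) (hr : r ∈ P) {y c : V}
    (hc : c ∈ Dom G P r y) (hcy : c ≠ y) : ∃ b ∈ Dom G P r y, b ≠ y ∧ G.Adj y b := by
  have := walk_induction hP hr (fun b => (Avoids G P r y b ∨ b = y) ∨
    ∃ b ∈ Dom G P r y, b ≠ y ∧ G.Adj y b) ?_ ?_ (Dom_subset _ hc)
  · rcases this with (h | h) | h
    · exact absurd h (mem_Dom.1 hc).2
    · exact absurd h hcy
    · exact h
  · by_cases h : r = y
    · exact Or.inl (Or.inr h)
    · exact Or.inl (Or.inl ⟨h, .refl⟩)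
  · rintro u v - hv huv ((h | h) | h)
    · by_cases hvy : v = y
      · exact Or.inl (Or.inr hvy)
      · exact Or.inl (Or.inl (h.step huv hv hvy))
    · subst h
      by_cases h' : Avoids G P r u v
      · exact Or.inl (Or.inl h')
      · exact Or.inr ⟨v, mem_Dom.2 ⟨hv, h'⟩, huv.ne', huv⟩
    · exact Or.inr h

/-- If `y` dominates only itself, then it is not a cut vertex of `P`. -/
lemma conn_erase [DecidableEq V] (hr : r ∈ P) {y : V} (hry : r ≠ y)
    (hy : Dom G P r y = {y}) : Conn G (P.erase y) := by
  refine conn_of_reach (Finset.mem_erase.2 ⟨hry, hr⟩) ?_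
  intro b hb
  obtain ⟨hby, hbP⟩ := Finset.mem_erase.1 hb
  have h : Avoids G P r y b := by
    by_contra h
    have : b ∈ Dom G P r y := mem_Dom.2 ⟨hbP, h⟩
    rw [hy, Finset.mem_singleton] at this
    exact hby this
  exact h.2.lift id fun u v h => ⟨h.1, Finset.mem_erase.2 ⟨h.2.2, h.2.1⟩⟩

open Classical in
/-- The children of `y` in the dominator tree: the vertices `a ≠ y` dominated by `y` whose
dominated set is maximal. -/
noncomputable def domChildren (G : SimpleGraph V) (P : Finset V) (r y : V) : Finset V :=
  (Dom G P r y).filter fun a => a ≠ y ∧ ∀ b ∈ Dom G P r y, b ≠ y → a ∈ Dom G P r b → b = a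

lemma mem_domChildren {y a : V} : a ∈ domChildren G P r y ↔ a ∈ Dom G P r y ∧ a ≠ y ∧
    ∀ b ∈ Dom G P r y, b ≠ y → a ∈ Dom G P r b → b = a := by
  classical
  simp [domChildren]

lemma exists_domChild (hP : Conn G P) (hr : r ∈ P) {y c : V} (hc : c ∈ Dom G P r y)
    (hcy : c ≠ y) : ∃ a ∈ domChildren G P r y, c ∈ Dom G P r a := by
  classical
  obtain ⟨a, ha, hmax⟩ := Finset.exists_max_image
    ((Dom G P r y).filter fun a => a ≠ y ∧ c ∈ Dom G P r a) (fun a => (Dom G P r a).card)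
    ⟨c, Finset.mem_filter.2 ⟨hc, hcy, self_mem_Dom (Dom_subset _ hc)⟩⟩
  obtain ⟨ha1, ha2, ha3⟩ := Finset.mem_filter.1 ha
  refine ⟨a, mem_domChildren.2 ⟨ha1, ha2, ?_⟩, ha3⟩
  intro b hb hby hab
  by_contra hne
  have hsub := Dom_mono hab
  have hle := hmax b (Finset.mem_filter.2 ⟨hb, hby, hsub ha3⟩)
  have heq := Finset.eq_of_subset_of_card_le hsub hle
  have hbP := Dom_subset _ hb
  exact not_mem_Dom_of_mem hP hr hbP hab (Ne.symm hne) (heq ▸ self_mem_Dom hbP)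

lemma Dom_disjoint (hP : Conn G P) (hr : r ∈ P) {y a b : V} (ha : a ∈ domChildren G P r y)
    (hb : b ∈ domChildren G P r y) (hab : a ≠ b) : Disjoint (Dom G P r a) (Dom G P r b) := by
  rw [Finset.disjoint_left]
  intro c hca hcb
  rw [mem_domChildren] at ha hb
  rcases Dom_laminar hP hr (Dom_subset _ ha.1) (Dom_subset _ hb.1) hca hcb with h | h
  · exact hab (ha.2.2 b hb.1 hb.2.1 h).symm
  · exact hab (hb.2.2 a ha.1 ha.2.1 h)

/-- Every edge of `P` leaving the set dominated by `a` starts at `a`. -/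
lemma eq_of_adj_Dom {a u v : V} (hu : u ∈ Dom G P r a) (hv : v ∈ P) (hva : v ∉ Dom G P r a)
    (huv : G.Adj u v) : u = a := by
  by_contra h
  exact hva (mem_Dom_of_adj hu h huv hv)

lemma Dom_eq_insert [DecidableEq V] (hP : Conn G P) (hr : r ∈ P) {y : V} (hy : y ∈ P) :
    Dom G P r y = insert y ((domChildren G P r y).biUnion (Dom G P r)) := by
  ext c
  rw [Finset.mem_insert, Finset.mem_biUnion]
  constructor
  · intro hc
    by_cases hcy : c = y
    · exact Or.inl hcy
    · exact Or.inr (exists_domChild hP hr hc hcy)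
  · rintro (rfl | ⟨a, ha, hc⟩)
    · exact self_mem_Dom hy
    · exact Dom_mono (mem_domChildren.1 ha).1 hc

lemma sum_Dom (hP : Conn G P) (hr : r ∈ P) {y : V} (hy : y ∈ P) (w : V → ℝ) :
    ∑ v ∈ Dom G P r y, w v =
      w y + ∑ a ∈ domChildren G P r y, ∑ v ∈ Dom G P r a, w v := by
  classical
  rw [Dom_eq_insert hP hr hy, Finset.sum_insert, Finset.sum_biUnion]
  · intro a ha b hb hab
    exact Dom_disjoint hP hr ha hb hab
  · rw [Finset.mem_biUnion]
    rintro ⟨a, ha, hya⟩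
    have := mem_domChildren.1 ha
    exact not_mem_Dom_of_mem hP hr hy this.1 this.2.1 hya

end Dominators

/-! ### A heavy stable set in a minimal connecting set -/

section Signed

variable {V ι : Type} {G : SimpleGraph V} {P : Finset V} {r : V}

/-- A certificate for the part of `P` dominated by `y`.  The stable set `S` of `Dom G P r y` is
the heavy one being constructed.  The connected set `X` joins `y` to the terminal set `T j`, and
the stable set `U ⊆ X` avoids `T j`; by the hypothesis of `exists_cert` it has less than half of
the weight of `X`, and `balance` then makes `S` heavy in `Dom G P r y`.  The vertex `y` lies in
exactly one of `S` and `U`. -/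
structure Cert (G : SimpleGraph V) (P : Finset V) (r : V) (w : V → ℝ) (T : ι → Set V)
    (y : V) (j : ι) (S X U : Finset V) : Prop where
  S_sub : S ⊆ Dom G P r y
  S_stab : Stab G S
  X_sub : X ⊆ Dom G P r y
  X_conn : Conn G X
  y_mem : y ∈ X
  meets : ∃ v ∈ X, v ∈ T j
  terminals : ∀ v ∈ P, v ∈ T j → v ∈ X
  U_sub : U ⊆ X
  U_stab : Stab G U
  U_avoid : ∀ u ∈ U, u ∉ T j
  sign : y ∈ S ↔ y ∉ U
  balance : 0 ≤ (2 * ∑ v ∈ S, w v - ∑ v ∈ Dom G P r y, w v) +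
    (2 * ∑ v ∈ U, w v - ∑ v ∈ X, w v)

/-- Induction along the dominator tree.  A vertex `y` is put into the stable set exactly when none
of its children adjacent to it is.  Two children in the stable set are never adjacent: each would
have to be strictly more advantageous than the other. -/
lemma exists_cert {w : V → ℝ} {T : ι → Set V} (hP : Conn G P) (hr : r ∈ P)
    (hleaf : ∀ y ∈ P, Dom G P r y = {y} → ∃ j, ∀ v ∈ P, v ∈ T j ↔ v = y)
    (hstar : ∀ j X U, X ⊆ P → Conn G X → (∃ v ∈ X, v ∈ T j) → U ⊆ X → Stab G U →
      (∀ u ∈ U, u ∉ T j) → 2 * ∑ v ∈ U, w v < ∑ v ∈ X, w v) :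
    ∀ n, ∀ y ∈ P, (Dom G P r y).card ≤ n → ∃ j S X U, Cert G P r w T y j S X U := by
  classical
  intro n
  induction n with
  | zero =>
    intro y hy hn
    rw [Nat.le_zero, Finset.card_eq_zero] at hn
    have := self_mem_Dom (G := G) (r := r) hy
    rw [hn] at this
    simp at this
  | succ n ih =>
    intro y hy hn
    set K := domChildren G P r y with hK
    have hKy : ∀ a ∈ K, y ∉ Dom G P r a := fun a ha =>
      not_mem_Dom_of_mem hP hr hy (mem_domChildren.1 ha).1 (mem_domChildren.1 ha).2.1
    have hKP : ∀ a ∈ K, a ∈ P := fun a ha => Dom_subset _ (mem_domChildren.1 ha).1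
    have hKsub : ∀ a ∈ K, Dom G P r a ⊆ Dom G P r y := fun a ha =>
      Dom_mono (mem_domChildren.1 ha).1
    have hKdisj : ∀ a ∈ K, ∀ b ∈ K, a ≠ b → Disjoint (Dom G P r a) (Dom G P r b) :=
      fun a ha b hb hab => Dom_disjoint hP hr ha hb hab
    by_cases hleafy : Dom G P r y = {y}
    · obtain ⟨j, hj⟩ := hleaf y hy hleafy
      refine ⟨j, {y}, {y}, ∅, ?_⟩
      refine ⟨by rw [hleafy], ?_, by rw [hleafy], conn_singleton y, by simp,
        ⟨y, by simp, (hj y hy).2 rfl⟩, ?_, by simp, ?_, by simp, by simp, ?_⟩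
      · intro u hu v hv
        rw [Finset.mem_singleton.1 hu, Finset.mem_singleton.1 hv]
        exact G.irrefl
      · intro v hv hvj
        simpa using (hj v hv).1 hvj
      · intro u hu
        simp at hu
      · rw [hleafy]
        simp
        linarith
    have hcert : ∀ a, a ∈ K → ∃ j S X U, Cert G P r w T a j S X U := by
      intro a ha
      refine ih a (hKP a ha) ?_
      have : (Dom G P r a).card < (Dom G P r y).card :=
        Finset.card_lt_card ⟨hKsub a ha, fun h => hKy a ha (h (self_mem_Dom hy))⟩
      omega
    obtain ⟨c, hcD, hcy⟩ : ∃ c ∈ Dom G P r y, c ≠ y := by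
      by_contra hcon
      push Not at hcon
      exact hleafy (Finset.eq_singleton_iff_unique_mem.2 ⟨self_mem_Dom hy, hcon⟩)
    have hι : Nonempty ι := by
      obtain ⟨a, ha, -⟩ := exists_domChild hP hr hcD hcy
      exact ⟨(hcert a ha).choose⟩
    choose! j S X U hc using hcert
    have hneg : ∀ a ∈ K, 2 * ∑ v ∈ U a, w v < ∑ v ∈ X a, w v := fun a ha =>
      hstar (j a) (X a) (U a) ((hc a ha).X_sub.trans (Dom_subset a)) (hc a ha).X_conn
        (hc a ha).meets (hc a ha).U_sub (hc a ha).U_stab (hc a ha).U_avoid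
    -- the extremal inequality between two adjacent children in the stable set
    have hlt : ∀ a ∈ K, ∀ b ∈ K, G.Adj a b → a ∈ S a →
        (2 * ∑ v ∈ U a, w v - ∑ v ∈ X a, w v) <
          (2 * ∑ v ∈ U b, w v - ∑ v ∈ X b, w v) := by
      intro a ha b hb hab haS
      have hd := hKdisj a ha b hb hab.ne
      have haU : a ∉ U a := (hc a ha).sign.1 haS
      have hXb : Disjoint (X a) (Dom G P r b) :=
        Finset.disjoint_of_subset_left (hc a ha).X_sub hd
      have hUS : Disjoint (U a) (S b) :=
        Finset.disjoint_of_subset_left (hc a ha).U_sub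
          (Finset.disjoint_of_subset_right (hc b hb).S_sub hXb)
      have hno : ∀ u ∈ U a, ∀ v ∈ S b, ¬ G.Adj u v := by
        intro u hu v hv huv
        have hua := eq_of_adj_Dom ((hc a ha).X_sub ((hc a ha).U_sub hu))
          (Dom_subset _ ((hc b hb).S_sub hv))
          (fun h => Finset.disjoint_left.1 hd h ((hc b hb).S_sub hv)) huv
        exact haU (hua ▸ hu)
      have := hstar (j a) (X a ∪ Dom G P r b) (U a ∪ S b)
        (Finset.union_subset ((hc a ha).X_sub.trans (Dom_subset a)) (Dom_subset b))
        ((hc a ha).X_conn.union_adj (conn_Dom hP hr (hKP b hb)) (hc a ha).y_mem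
          (self_mem_Dom (hKP b hb)) hab)
        (by obtain ⟨v, hv, hv'⟩ := (hc a ha).meets
            exact ⟨v, Finset.mem_union_left _ hv, hv'⟩)
        (Finset.union_subset_union (hc a ha).U_sub (hc b hb).S_sub)
        (by
          intro u hu v hv huv
          rcases Finset.mem_union.1 hu with hu | hu <;> rcases Finset.mem_union.1 hv with hv | hv
          · exact (hc a ha).U_stab u hu v hv huv
          · exact hno u hu v hv huv
          · exact hno v hv u hu huv.symm
          · exact (hc b hb).S_stab u hu v hv huv)
        (by
          intro u hu huT
          rcases Finset.mem_union.1 hu with hu | hu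
          · exact (hc a ha).U_avoid u hu huT
          · have hub := (hc b hb).S_sub hu
            exact Finset.disjoint_left.1 hXb
              ((hc a ha).terminals u (Dom_subset _ hub) huT) hub)
      rw [Finset.sum_union hXb, Finset.sum_union hUS] at this
      have := (hc b hb).balance
      linarith
    set S' := K.biUnion S with hS'
    have hS'sub : ∀ v ∈ S', ∃ a ∈ K, v ∈ S a := by
      intro v hv
      simpa [hS'] using hv
    have hyS' : y ∉ S' := by
      intro h
      obtain ⟨a, ha, hya⟩ := hS'sub y h
      exact hKy a ha ((hc a ha).S_sub hya)
    have hS'stab : Stab G S' := by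
      intro u hu v hv huv
      obtain ⟨a, ha, hua⟩ := hS'sub u hu
      obtain ⟨b, hb, hvb⟩ := hS'sub v hv
      by_cases hab : a = b
      · subst hab
        exact (hc a ha).S_stab u hua v hvb huv
      · have hd := hKdisj a ha b hb hab
        have hu' := (hc a ha).S_sub hua
        have hv' := (hc b hb).S_sub hvb
        have h1 := eq_of_adj_Dom hu' (Dom_subset _ hv')
          (fun h => Finset.disjoint_left.1 hd h hv') huv
        have h2 := eq_of_adj_Dom hv' (Dom_subset _ hu')
          (fun h => Finset.disjoint_left.1 hd hu' h) huv.symm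
        subst h1 h2
        exact lt_asymm (hlt u ha v hb huv hua) (hlt v hb u ha huv.symm hvb)
    have hS'Dom : S' ⊆ Dom G P r y := by
      intro v hv
      obtain ⟨a, ha, hva⟩ := hS'sub v hv
      exact hKsub a ha ((hc a ha).S_sub hva)
    have hS'sum : ∑ v ∈ S', w v = ∑ a ∈ K, ∑ v ∈ S a, w v := by
      rw [hS', Finset.sum_biUnion]
      intro a ha b hb hab
      exact Finset.disjoint_of_subset_left (hc a ha).S_sub
        (Finset.disjoint_of_subset_right (hc b hb).S_sub (hKdisj a ha b hb hab))
    have hsum := sum_Dom hP hr hy w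
    have htot : ∀ a ∈ K, 2 * ∑ v ∈ S a, w v - ∑ v ∈ Dom G P r a, w v ≤
        2 * ∑ v ∈ S', w v - ∑ b ∈ K, ∑ v ∈ Dom G P r b, w v := by
      intro a ha
      rw [hS'sum, Finset.mul_sum K, ← Finset.sum_sub_distrib]
      refine Finset.single_le_sum
        (f := fun b => 2 * ∑ v ∈ S b, w v - ∑ v ∈ Dom G P r b, w v) ?_ ha
      intro b hb
      have h1 := (hc b hb).balance
      have h2 := hneg b hb
      linarith
    have hadj : ∀ a ∈ K, ∀ v ∈ Dom G P r a, G.Adj v y → v = a := fun a ha v hv hvy =>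
      eq_of_adj_Dom hv hy (hKy a ha) hvy
    have hXy : ∀ a ∈ K, y ∉ X a := fun a ha h => hKy a ha ((hc a ha).X_sub h)
    have hXins : ∀ a ∈ K, insert y (X a) ⊆ Dom G P r y := fun a ha =>
      Finset.insert_subset (self_mem_Dom hy) ((hc a ha).X_sub.trans (hKsub a ha))
    have hXconn : ∀ a ∈ K, G.Adj a y → Conn G (insert y (X a)) := by
      intro a ha hay
      rw [Finset.insert_eq]
      exact (conn_singleton y).union_adj (hc a ha).X_conn (Finset.mem_singleton_self y)
        (hc a ha).y_mem hay.symm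
    have hXmeets : ∀ a ∈ K, ∃ v ∈ insert y (X a), v ∈ T (j a) := by
      intro a ha
      obtain ⟨v, hv, hv'⟩ := (hc a ha).meets
      exact ⟨v, Finset.mem_insert_of_mem hv, hv'⟩
    have hinsStab : ∀ A : Finset V, Stab G A → (∀ v ∈ A, ¬ G.Adj v y) → Stab G (insert y A) := by
      intro A hA hAy u hu v hv huv
      rcases Finset.mem_insert.1 hu with hu1 | hu1 <;>
        rcases Finset.mem_insert.1 hv with hv1 | hv1
      · rw [hu1, hv1] at huv
        exact G.irrefl huv
      · exact hAy v hv1 (hu1 ▸ huv.symm)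
      · exact hAy u hu1 (hv1 ▸ huv)
      · exact hA u hu1 v hv1 huv
    by_cases hpos : ∃ a ∈ K, G.Adj a y ∧ a ∈ S a
    · obtain ⟨a, ha, hay, haS⟩ := hpos
      have haU : a ∉ U a := (hc a ha).sign.1 haS
      refine ⟨j a, S', insert y (X a), insert y (U a), hS'Dom, hS'stab, hXins a ha,
        hXconn a ha hay, Finset.mem_insert_self _ _, hXmeets a ha,
        fun v hv hvT => Finset.mem_insert_of_mem ((hc a ha).terminals v hv hvT),
        Finset.insert_subset_insert _ (hc a ha).U_sub, ?_, ?_, ?_, ?_⟩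
      · refine hinsStab _ (hc a ha).U_stab ?_
        intro v hv hvy
        exact haU (hadj a ha v ((hc a ha).X_sub ((hc a ha).U_sub hv)) hvy ▸ hv)
      · intro u hu huT
        rcases Finset.mem_insert.1 hu with rfl | hu
        · exact hXy a ha ((hc a ha).terminals u hy huT)
        · exact (hc a ha).U_avoid u hu huT
      · simp [hyS']
      · rw [Finset.sum_insert (hXy a ha), Finset.sum_insert
          (fun h => hXy a ha ((hc a ha).U_sub h)), hsum]
        have h1 := htot a ha
        have h2 := (hc a ha).balance
        linarith
    · push Not at hpos
      obtain ⟨b, hbD, hby, hyb⟩ := exists_adj_Dom hP hr hcD hcy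
      obtain ⟨a, ha, hba⟩ := exists_domChild hP hr hbD hby
      have hba' := hadj a ha b hba hyb.symm
      subst hba'
      refine ⟨j b, insert y S', insert y (X b), U b,
        Finset.insert_subset (self_mem_Dom hy) hS'Dom, ?_, hXins b ha,
        hXconn b ha hyb.symm, Finset.mem_insert_self _ _, hXmeets b ha,
        fun v hv hvT => Finset.mem_insert_of_mem ((hc b ha).terminals v hv hvT),
        (hc b ha).U_sub.trans (Finset.subset_insert _ _), (hc b ha).U_stab,
        (hc b ha).U_avoid, ?_, ?_⟩
      · refine hinsStab _ hS'stab ?_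
        intro v hv hvy
        obtain ⟨a, ha, hva⟩ := hS'sub v hv
        have := hadj a ha v ((hc a ha).S_sub hva) hvy
        subst this
        exact hpos v ha hvy hva
      · simp only [Finset.mem_insert, true_or, true_iff]
        exact fun h => hXy b ha ((hc b ha).U_sub h)
      · rw [Finset.sum_insert (hXy b ha), Finset.sum_insert hyS', hsum]
        have h1 := htot b ha
        have h2 := (hc b ha).balance
        linarith

end Signed

/-! ### Stable sets of large weight in graphs without a clique minor -/

section Peeling

variable {V : Type} {G : SimpleGraph V}

/-- The vertices with a neighbour in `Q`. -/
def Nb (G : SimpleGraph V) (Q : Finset V) : Set V := {v | ∃ q ∈ Q, G.Adj q v}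

/-- Suppose that in connected subsets of `D` meeting a terminal set `T j`, stable sets avoiding
`T j` carry less than half of the weight.  Then a smallest connected subset of `D` meeting all
terminal sets has a stable subset carrying at least half of its weight. -/
lemma exists_half_stable_connector {ι : Type} {w : V → ℝ} (hw : ∀ v, 0 ≤ w v) {T : ι → Set V}
    {D : Finset V} (hD : Conn G D) (hT : ∀ j, ∃ v ∈ D, v ∈ T j)
    (hstar : ∀ j X U, X ⊆ D → Conn G X → (∃ v ∈ X, v ∈ T j) → U ⊆ X → Stab G U →
      (∀ u ∈ U, u ∉ T j) → 2 * ∑ v ∈ U, w v < ∑ v ∈ X, w v) :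
    ∃ P S, P ⊆ D ∧ Conn G P ∧ (∀ j, ∃ v ∈ P, v ∈ T j) ∧ S ⊆ P ∧ Stab G S ∧
      ∑ v ∈ P, w v ≤ 2 * ∑ v ∈ S, w v := by
  classical
  obtain ⟨P, hP, hmin⟩ := Finset.exists_min_image
    (D.powerset.filter fun P => Conn G P ∧ ∀ j, ∃ v ∈ P, v ∈ T j) Finset.card
    ⟨D, Finset.mem_filter.2 ⟨Finset.mem_powerset_self D, hD, hT⟩⟩
  obtain ⟨hPD, hPc, hPT⟩ := Finset.mem_filter.1 hP
  rw [Finset.mem_powerset] at hPD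
  obtain ⟨r, hr⟩ := hPc.nonempty
  by_cases hPr : P = {r}
  · refine ⟨P, P, hPD, hPc, hPT, subset_rfl, ?_, ?_⟩
    · intro u hu v hv
      rw [hPr, Finset.mem_singleton] at hu hv
      rw [hu, hv]
      exact G.irrefl
    · have : 0 ≤ ∑ v ∈ P, w v := Finset.sum_nonneg fun v _ => hw v
      linarith
  have hleaf : ∀ y ∈ P, Dom G P r y = {y} → ∃ j, ∀ v ∈ P, v ∈ T j ↔ v = y := by
    intro y hy hDy
    have hry : r ≠ y := by
      rintro rfl
      exact hPr (Dom_root.symm.trans hDy)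
    have hconn := conn_erase hr hry hDy
    by_contra hcon
    push Not at hcon
    have := hmin (P.erase y) (Finset.mem_filter.2 ⟨Finset.mem_powerset.2
      ((Finset.erase_subset _ _).trans hPD), hconn, ?_⟩)
    · have h2 := Finset.card_erase_lt_of_mem hy
      omega
    · intro j
      obtain ⟨v, hv, hvT⟩ := hPT j
      by_cases hvy : v = y
      · subst hvy
        obtain ⟨u, hu, h | h⟩ := hcon j
        · exact ⟨u, Finset.mem_erase.2 ⟨h.2, hu⟩, h.1⟩
        · exact absurd hvT (h.2 ▸ h.1)
      · exact ⟨v, Finset.mem_erase.2 ⟨hvy, hv⟩, hvT⟩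
  have hstarP : ∀ j X U, X ⊆ P → Conn G X → (∃ v ∈ X, v ∈ T j) → U ⊆ X → Stab G U →
      (∀ u ∈ U, u ∉ T j) → 2 * ∑ v ∈ U, w v < ∑ v ∈ X, w v :=
    fun j X U hX => hstar j X U (hX.trans hPD)
  obtain ⟨j, S, X, U, hc⟩ := exists_cert hPc hr hleaf hstarP _ r hr le_rfl
  have hS := hc.S_sub
  have hb := hc.balance
  have hX := hc.X_sub
  rw [Dom_root] at hS hb hX
  have := hstarP j X U hX hc.X_conn hc.meets hc.U_sub hc.U_stab hc.U_avoid
  exact ⟨P, S, hPD, hPc, hPT, hS, hc.S_stab, by linarith⟩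

/-- Among the half-stable connectors there is one that cannot be enlarged advantageously: a
connected set `X` attached to it has more than half of its weight outside any stable set `U` with
no neighbour in the connector.  One takes a connector maximising the excess
`2 w(S) - w(P)` and, subject to that, the number of its vertices. -/
lemma exists_maximal_connector {ι : Type} {w : V → ℝ} (hw : ∀ v, 0 ≤ w v) {T : ι → Set V}
    {D : Finset V} (hD : Conn G D) (hT : ∀ j, ∃ v ∈ D, v ∈ T j)
    (hstar : ∀ j X U, X ⊆ D → Conn G X → (∃ v ∈ X, v ∈ T j) → U ⊆ X → Stab G U →
      (∀ u ∈ U, u ∉ T j) → 2 * ∑ v ∈ U, w v < ∑ v ∈ X, w v) :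
    ∃ P S, P ⊆ D ∧ Conn G P ∧ (∀ j, ∃ v ∈ P, v ∈ T j) ∧ S ⊆ P ∧ Stab G S ∧
      ∑ v ∈ P, w v ≤ 2 * ∑ v ∈ S, w v ∧
      ∀ X U, X ⊆ D → Disjoint P X → Conn G X → (∃ v ∈ X, v ∈ Nb G P) → U ⊆ X → Stab G U →
        (∀ u ∈ U, u ∉ Nb G P) → 2 * ∑ v ∈ U, w v < ∑ v ∈ X, w v := by
  classical
  obtain ⟨P0, S0, hP0D, hP0c, hP0T, hS0, hS0s, hS0w⟩ :=
    exists_half_stable_connector hw hD hT hstar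
  obtain ⟨⟨P, S⟩, hPS, hmax⟩ := Finset.exists_max_image
    ((D.powerset ×ˢ D.powerset).filter fun p : Finset V × Finset V =>
      Conn G p.1 ∧ (∀ j, ∃ v ∈ p.1, v ∈ T j) ∧ p.2 ⊆ p.1 ∧ Stab G p.2)
    (fun p => toLex (2 * ∑ v ∈ p.2, w v - ∑ v ∈ p.1, w v, p.1.card))
    ⟨(P0, S0), Finset.mem_filter.2 ⟨Finset.mem_product.2 ⟨Finset.mem_powerset.2 hP0D,
      Finset.mem_powerset.2 (hS0.trans hP0D)⟩, hP0c, hP0T, hS0, hS0s⟩⟩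
  obtain ⟨hm, hPc, hPT, hSP, hSs⟩ := Finset.mem_filter.1 hPS
  have hPD := Finset.mem_powerset.1 (Finset.mem_product.1 hm).1
  simp only at hPc hPT hSP hSs hPD
  refine ⟨P, S, hPD, hPc, hPT, hSP, hSs, ?_, ?_⟩
  · have := hmax (P0, S0) (Finset.mem_filter.2 ⟨Finset.mem_product.2 ⟨Finset.mem_powerset.2 hP0D,
      Finset.mem_powerset.2 (hS0.trans hP0D)⟩, hP0c, hP0T, hS0, hS0s⟩)
    rw [Prod.Lex.toLex_le_toLex] at this
    simp only at this
    rcases this with h | h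
    · linarith
    · linarith [h.1]
  · rintro X U hX hPX hXc ⟨v, hvX, q, hq, hqv⟩ hUX hUs hUN
    by_contra hcon
    push Not at hcon
    have hSU : Disjoint S U :=
      Finset.disjoint_of_subset_left hSP (Finset.disjoint_of_subset_right hUX hPX)
    have := hmax (P ∪ X, S ∪ U) (Finset.mem_filter.2 ⟨Finset.mem_product.2
      ⟨Finset.mem_powerset.2 (Finset.union_subset hPD hX), Finset.mem_powerset.2
        (Finset.union_subset (hSP.trans hPD) (hUX.trans hX))⟩,
      hPc.union_adj hXc hq hvX hqv, ?_, Finset.union_subset_union hSP hUX, ?_⟩)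
    · rw [Prod.Lex.toLex_le_toLex] at this
      simp only at this
      rw [Finset.sum_union hPX, Finset.sum_union hSU, Finset.card_union_of_disjoint hPX] at this
      have hpos := Finset.card_pos.2 ⟨v, hvX⟩
      rcases this with h | h
      · linarith
      · omega
    · intro j
      obtain ⟨v, hv, hvT⟩ := hPT j
      exact ⟨v, Finset.mem_union_left _ hv, hvT⟩
    · intro a ha b hb hab
      rcases Finset.mem_union.1 ha with ha | ha <;> rcases Finset.mem_union.1 hb with hb | hb
      · exact hSs a ha b hb hab
      · exact hUN b hb ⟨a, hSP ha, hab⟩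
      · exact hUN a ha ⟨b, hSP hb, hab.symm⟩
      · exact hUs a ha b hb hab

/-- Pairwise disjoint and pairwise touching connected sets number less than `k`. -/
lemma card_lt_of_not_hasCliqueMinor {k : ℕ} (hminor : ¬ HasCliqueMinor G k)
    (F : Finset (Finset V)) (hc : ∀ Q ∈ F, Conn G Q)
    (hd : ∀ Q ∈ F, ∀ R ∈ F, Q ≠ R → Disjoint Q R)
    (ha : ∀ Q ∈ F, ∀ R ∈ F, Q ≠ R → ∃ v ∈ R, v ∈ Nb G Q) : F.card < k := by
  by_contra hcon
  push Not at hcon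
  obtain ⟨F', hF', hcard⟩ := Finset.exists_subset_card_eq hcon
  let e := (Finset.equivFinOfCardEq hcard).symm
  have hne : ∀ i j, i ≠ j → (e i : Finset V) ≠ e j := fun i j hij h =>
    hij (e.injective (Subtype.ext h))
  refine hminor ⟨fun i => ((e i : Finset V) : Set V), fun i => hc _ (hF' (e i).2), ?_, ?_⟩
  · intro i j hij
    exact Finset.disjoint_coe.2 (hd _ (hF' (e i).2) _ (hF' (e j).2) (hne i j hij))
  · intro i j hij
    obtain ⟨v, hv, q, hq, hqv⟩ := ha _ (hF' (e i).2) _ (hF' (e j).2) (hne i j hij)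
    exact ⟨q, hq, v, hv, hqv⟩

/-- The peeling recursion.  The members of `F` are the parts already removed, with colours `c`;
those seen by one connected subset of the remaining set `C` touch pairwise, so fewer than `k - 1`
of them can be seen by the next part, and a colour is left for its stable set. -/
lemma peel {k : ℕ} (hminor : ¬ HasCliqueMinor G k) {w : V → ℝ} (hw : ∀ v, 0 ≤ w v) :
    ∀ n, ∀ (C : Finset V) (F : Finset (Finset V)) (c : Finset V → Fin (k - 1)), C.card ≤ n →
    (∀ Q ∈ F, Conn G Q) → (∀ Q ∈ F, Disjoint Q C) →
    (∀ Q ∈ F, ∀ R ∈ F, Q ≠ R → Disjoint Q R) →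
    (∀ X ⊆ C, Conn G X → ∀ Q ∈ F, ∀ R ∈ F, Q ≠ R → (∃ v ∈ X, v ∈ Nb G Q) →
      (∃ v ∈ X, v ∈ Nb G R) → ∃ v ∈ R, v ∈ Nb G Q) →
    (∀ Q ∈ F, ∀ X U, X ⊆ C → Conn G X → (∃ v ∈ X, v ∈ Nb G Q) → U ⊆ X → Stab G U →
      (∀ u ∈ U, u ∉ Nb G Q) → 2 * ∑ v ∈ U, w v < ∑ v ∈ X, w v) →
    ∃ S ⊆ C, ∃ f : V → Fin (k - 1), ∑ v ∈ C, w v ≤ 2 * ∑ v ∈ S, w v ∧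
      (∀ u ∈ S, ∀ v ∈ S, G.Adj u v → f u ≠ f v) ∧
      ∀ Q ∈ F, ∀ v ∈ S, v ∈ Nb G Q → f v ≠ c Q := by
  classical
  intro n
  induction n with
  | zero =>
    intro C F c hn _ _ _ _ _
    rw [Nat.le_zero, Finset.card_eq_zero] at hn
    subst hn
    exact ⟨∅, subset_rfl, fun _ => c ∅, by simp, by simp, by simp⟩
  | succ n ih =>
    intro C F c hn hFc hFC hFd hFt hFs
    by_cases hC : C = ∅
    · subst hC
      exact ⟨∅, subset_rfl, fun _ => c ∅, by simp, by simp, by simp⟩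
    obtain ⟨x, hx⟩ := Finset.nonempty_iff_ne_empty.2 hC
    -- a connected component `D` of `C`
    obtain ⟨D, hD, hDmax⟩ := Finset.exists_max_image
      (C.powerset.filter fun D => Conn G D) Finset.card
      ⟨{x}, Finset.mem_filter.2 ⟨Finset.mem_powerset.2 (Finset.singleton_subset_iff.2 hx),
        conn_singleton x⟩⟩
    obtain ⟨hDC, hDc⟩ := Finset.mem_filter.1 hD
    rw [Finset.mem_powerset] at hDC
    have hcomp : ∀ X ⊆ C, Conn G X → (∃ v ∈ X, v ∈ Nb G D) → X ⊆ D := by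
      rintro X hX hXc ⟨v, hv, q, hq, hqv⟩
      have h1 := hDmax (D ∪ X) (Finset.mem_filter.2 ⟨Finset.mem_powerset.2
        (Finset.union_subset hDC hX), hDc.union_adj hXc hq hv hqv⟩)
      have h2 := Finset.eq_of_subset_of_card_le Finset.subset_union_left h1
      exact h2 ▸ Finset.subset_union_right
    set FD := F.filter fun Q => ∃ v ∈ D, v ∈ Nb G Q with hFD
    have hFDF : ∀ Q ∈ FD, Q ∈ F := fun Q hQ => (Finset.mem_filter.1 hQ).1
    obtain ⟨P, S, hPD, hPc, hPT, hSP, hSs, hSw, hPs⟩ := exists_maximal_connector (G := G) hw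
      (T := fun Q : {Q // Q ∈ FD} => Nb G Q.1) hDc
      (fun Q => (Finset.mem_filter.1 Q.2).2)
      (fun Q X U hX => hFs Q.1 (hFDF _ Q.2) X U (hX.trans hDC))
    have hPT' : ∀ Q ∈ FD, ∃ v ∈ P, v ∈ Nb G Q := fun Q hQ => hPT ⟨Q, hQ⟩
    have hPC : P ⊆ C := hPD.trans hDC
    have hPF : ∀ Q ∈ F, Disjoint Q P := fun Q hQ => Finset.disjoint_of_subset_right hPC (hFC Q hQ)
    have hPnF : P ∉ F := by
      intro h
      have := hPF P h
      rw [Finset.disjoint_self_iff_empty] at this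
      exact hPc.nonempty.ne_empty this
    have hsymm : ∀ A B : Finset V, (∃ v ∈ A, v ∈ Nb G B) → ∃ v ∈ B, v ∈ Nb G A := by
      rintro A B ⟨v, hv, q, hq, hqv⟩
      exact ⟨q, hq, v, hv, hqv.symm⟩
    have hcard : (insert P FD).card < k := by
      refine card_lt_of_not_hasCliqueMinor hminor _ ?_ ?_ ?_
      · intro Q hQ
        rcases Finset.mem_insert.1 hQ with rfl | hQ
        · exact hPc
        · exact hFc Q (hFDF Q hQ)
      · intro Q hQ R hR hQR
        rcases Finset.mem_insert.1 hQ with hQ | hQ <;> rcases Finset.mem_insert.1 hR with hR | hR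
        · exact absurd (hQ.trans hR.symm) hQR
        · rw [hQ]; exact (hPF R (hFDF R hR)).symm
        · rw [hR]; exact hPF Q (hFDF Q hQ)
        · exact hFd Q (hFDF Q hQ) R (hFDF R hR) hQR
      · intro Q hQ R hR hQR
        rcases Finset.mem_insert.1 hQ with hQ | hQ <;> rcases Finset.mem_insert.1 hR with hR | hR
        · exact absurd (hQ.trans hR.symm) hQR
        · rw [hQ]; exact hsymm _ _ (hPT' R hR)
        · rw [hR]; exact hPT' Q hQ
        · exact hFt D hDC hDc Q (hFDF Q hQ) R (hFDF R hR) hQR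
            (Finset.mem_filter.1 hQ).2 (Finset.mem_filter.1 hR).2
    rw [Finset.card_insert_of_notMem (fun h => hPnF (hFDF P h))] at hcard
    obtain ⟨γ, hγ⟩ : ∃ γ : Fin (k - 1), γ ∉ FD.image c := by
      by_contra hcon
      push Not at hcon
      have h1 : (FD.image c) = Finset.univ := Finset.eq_univ_iff_forall.2 hcon
      have h2 := Finset.card_image_le (s := FD) (f := c)
      rw [h1, Finset.card_univ, Fintype.card_fin] at h2
      omega
    have hγ' : ∀ Q ∈ FD, c Q ≠ γ := fun Q hQ h => hγ (Finset.mem_image.2 ⟨Q, hQ, h⟩)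
    -- connected subsets of the rest that see `P` lie in `D`
    have hXD : ∀ X ⊆ C \ P, Conn G X → (∃ v ∈ X, v ∈ Nb G P) → X ⊆ D := by
      rintro X hX hXc ⟨v, hv, q, hq, hqv⟩
      exact hcomp X (hX.trans Finset.sdiff_subset) hXc ⟨v, hv, q, hPD hq, hqv⟩
    have hFDmem : ∀ Q ∈ F, ∀ X ⊆ D, (∃ v ∈ X, v ∈ Nb G Q) → Q ∈ FD := by
      rintro Q hQ X hX ⟨v, hv, hvQ⟩
      exact Finset.mem_filter.2 ⟨hQ, v, hX hv, hvQ⟩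
    obtain ⟨S', hS'C, f, hS'w, hf, hfQ⟩ := ih (C \ P) (insert P F) (Function.update c P γ)
      (by
        have := Finset.card_lt_card (Finset.sdiff_ssubset hPC hPc.nonempty)
        omega)
      (by
        intro Q hQ
        rcases Finset.mem_insert.1 hQ with rfl | hQ
        · exact hPc
        · exact hFc Q hQ)
      (by
        intro Q hQ
        rcases Finset.mem_insert.1 hQ with rfl | hQ
        · exact Finset.disjoint_sdiff
        · exact Finset.disjoint_of_subset_right Finset.sdiff_subset (hFC Q hQ))
      (by
        intro Q hQ R hR hQR
        rcases Finset.mem_insert.1 hQ with hQ | hQ <;> rcases Finset.mem_insert.1 hR with hR | hR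
        · exact absurd (hQ.trans hR.symm) hQR
        · rw [hQ]; exact (hPF R hR).symm
        · rw [hR]; exact hPF Q hQ
        · exact hFd Q hQ R hR hQR)
      (by
        intro X hX hXc Q hQ R hR hQR hXQ hXR
        rcases Finset.mem_insert.1 hQ with hQ | hQ <;> rcases Finset.mem_insert.1 hR with hR | hR
        · exact absurd (hQ.trans hR.symm) hQR
        · rw [hQ] at hXQ ⊢
          exact hsymm _ _ (hPT' R (hFDmem R hR X (hXD X hX hXc hXQ) hXR))
        · rw [hR] at hXR ⊢
          exact hPT' Q (hFDmem Q hQ X (hXD X hX hXc hXR) hXQ)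
        · exact hFt X (hX.trans Finset.sdiff_subset) hXc Q hQ R hR hQR hXQ hXR)
      (by
        intro Q hQ X U hX hXc hXQ
        rcases Finset.mem_insert.1 hQ with rfl | hQ
        · exact hPs X U (hXD X hX hXc hXQ)
            (Finset.disjoint_of_subset_right hX Finset.disjoint_sdiff) hXc hXQ
        · exact hFs Q hQ X U (hX.trans Finset.sdiff_subset) hXc hXQ)
    have hS'P : ∀ v ∈ S', v ∉ S := fun v hv h => (Finset.mem_sdiff.1 (hS'C hv)).2 (hSP h)
    have hne : ∀ u ∈ S, ∀ v ∈ S', G.Adj u v → f v ≠ γ := by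
      intro u hu v hv huv
      have := hfQ P (Finset.mem_insert_self _ _) v hv ⟨u, hSP hu, huv⟩
      rwa [Function.update_self] at this
    refine ⟨S ∪ S', Finset.union_subset (hSP.trans hPC) (hS'C.trans Finset.sdiff_subset),
      fun v => if v ∈ S then γ else f v, ?_, ?_, ?_⟩
    · rw [Finset.sum_union (Finset.disjoint_right.2 hS'P), ← Finset.sum_sdiff hPC]
      linarith
    · intro u hu v hv huv
      rcases Finset.mem_union.1 hu with hu | hu <;> rcases Finset.mem_union.1 hv with hv | hv
      · exact absurd huv (hSs u hu v hv)
      · simpa [hu, hS'P v hv] using (hne u hu v hv huv).symm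
      · simpa [hv, hS'P u hu] using hne v hv u hu huv.symm
      · simpa [hS'P v hv, hS'P u hu] using hf u hu v hv huv
    · intro Q hQ v hv hvQ
      rcases Finset.mem_union.1 hv with hv | hv
      · simp only [hv, if_true]
        exact (hγ' Q (hFDmem Q hQ D subset_rfl ⟨v, hPD (hSP hv), hvQ⟩)).symm
      · simp only [hS'P v hv, if_false]
        have := hfQ Q (Finset.mem_insert_of_mem hQ) v hv hvQ
        have hQP : Q ≠ P := fun h => hPnF (h ▸ hQ)
        rwa [Function.update_of_ne hQP] at this

/-- The theorem of Reed and Seymour in its dual form: for every weighting of a graph without a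
`K_k` minor, some stable set carries at least a `1 / (2 (k - 1))` fraction of the weight. -/
theorem exists_stable_of_not_hasCliqueMinor [Fintype V] {k : ℕ} (hk : 2 ≤ k)
    (hminor : ¬ HasCliqueMinor G k) {w : V → ℝ} (hw : ∀ v, 0 ≤ w v) :
    ∃ I : Finset V, Stab G I ∧ ∑ v, w v ≤ 2 * ((k : ℝ) - 1) * ∑ v ∈ I, w v := by
  classical
  obtain ⟨S, -, f, hS, hf, -⟩ := peel hminor hw _ Finset.univ ∅ (fun _ => ⟨0, by omega⟩) le_rfl
    (by simp) (by simp) (by simp) (by simp) (by simp)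
  have : Nonempty (Fin (k - 1)) := ⟨⟨0, by omega⟩⟩
  obtain ⟨i, -, hi⟩ := Finset.exists_max_image (Finset.univ : Finset (Fin (k - 1)))
    (fun i => ∑ v ∈ S.filter (fun v => f v = i), w v) Finset.univ_nonempty
  refine ⟨S.filter fun v => f v = i, ?_, ?_⟩
  · intro u hu v hv huv
    rw [Finset.mem_filter] at hu hv
    exact hf u hu.1 v hv.1 huv (hu.2.trans hv.2.symm)
  · have h1 : ∑ v ∈ S, w v = ∑ i, ∑ v ∈ S.filter (fun v => f v = i), w v :=
      (Finset.sum_fiberwise S f w).symm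
    have h2 := Finset.sum_le_card_nsmul Finset.univ _ _ hi
    rw [Finset.card_univ, Fintype.card_fin, nsmul_eq_mul, Nat.cast_sub (by omega),
      Nat.cast_one] at h2
    linarith

end Peeling

/-! ### Vizing's theorem -/

section Vizing

variable {V κ : Type} {G : SimpleGraph V} {c : Sym2 V → Option κ} {x y₀ : V}

/-- A proper colouring of some of the edges of `G`; the value `none` stands for an uncoloured
pair. -/
structure PartialColouring (G : SimpleGraph V) (c : Sym2 V → Option κ) : Prop where
  edge : ∀ u v a, c s(u, v) = some a → G.Adj u v
  proper : ∀ u v v' a, c s(u, v) = some a → c s(u, v') = some a → v = v'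

/-- No edge at `u` has colour `a`. -/
def Miss (c : Sym2 V → Option κ) (u : V) (a : κ) : Prop := ∀ v, c s(u, v) ≠ some a

/-- A Vizing fan `y₀, …, y` centred at `x`: the colour of each edge from `x` to a later vertex is
missing at the vertex before it.  The fan is recorded by its last vertex and the list of the
earlier ones in reverse order. -/
inductive Fan (c : Sym2 V → Option κ) (x y₀ : V) : V → List V → Prop
  | base : Fan c x y₀ y₀ []
  | step {y z : V} {l : List V} {a : κ} (h : Fan c x y₀ y l) (hz : c s(x, z) = some a)
      (hy : Miss c y a) (hzl : z ∉ y :: l) : Fan c x y₀ z (y :: l)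

lemma Fan.mono {c' : Sym2 V → Option κ} {y : V} {l : List V} (h : Fan c x y₀ y l)
    (hc : ∀ z ∈ y :: l, ∀ u ∈ l, ∀ a, c s(x, z) = some a → Miss c u a →
      ∃ a', c' s(x, z) = some a' ∧ Miss c' u a') : Fan c' x y₀ y l := by
  induction h with
  | base => exact .base
  | step h hz hy hzl ih =>
    obtain ⟨a', h1, h2⟩ := hc _ List.mem_cons_self _ List.mem_cons_self _ hz hy
    exact .step (ih fun z hz u hu => hc z (List.mem_cons_of_mem _ hz) u
      (List.mem_cons_of_mem _ hu)) h1 h2 hzl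

lemma Fan.notMem {y : V} {l : List V} (h : Fan c x y₀ y l) : y ∉ l := by
  cases h with
  | base => simp
  | step _ _ _ hzl => exact hzl

lemma Fan.nodup {y : V} {l : List V} (h : Fan c x y₀ y l) : (y :: l).Nodup := by
  induction h with
  | base => simp
  | step _ _ _ hzl ih => exact List.nodup_cons.2 ⟨hzl, ih⟩

/-- The colour of an edge from `x` to a fan vertex is missing at an earlier vertex of the fan. -/
lemma Fan.exists_pred {y : V} {l : List V} (h : Fan c x y₀ y l) (h₀ : c s(x, y₀) = none) {z : V}
    {a : κ} (hz : z ∈ y :: l) (hza : c s(x, z) = some a) : ∃ p ∈ l, Miss c p a := by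
  induction h with
  | base =>
    rw [List.mem_singleton] at hz
    rw [hz, h₀] at hza
    cases hza
  | @step y z' l b h hz' hy hzl ih =>
    rcases List.mem_cons.1 hz with rfl | hz
    · rw [hz', Option.some_inj] at hza
      exact ⟨y, List.mem_cons_self, hza ▸ hy⟩
    · obtain ⟨p, hp, hpa⟩ := ih hz
      exact ⟨p, List.mem_cons_of_mem _ hp, hpa⟩

/-- A fan can be cut off at its earliest vertex with a given property. -/
lemma Fan.exists_first {y : V} {l : List V} (h : Fan c x y₀ y l) (Q : V → Prop)
    (hQ : ∃ u ∈ y :: l, Q u) : ∃ u l', Fan c x y₀ u l' ∧ Q u ∧ ∀ v ∈ l', ¬ Q v := by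
  induction h with
  | base =>
    obtain ⟨u, hu, hQu⟩ := hQ
    rw [List.mem_singleton] at hu
    exact ⟨y₀, [], .base, hu ▸ hQu, by simp⟩
  | @step y z l b h hz hy hzl ih =>
    by_cases h' : ∃ u ∈ y :: l, Q u
    · exact ih h'
    · push Not at h'
      obtain ⟨u, hu, hQu⟩ := hQ
      rcases List.mem_cons.1 hu with rfl | hu
      · exact ⟨u, _, .step h hz hy hzl, hQu, h'⟩
      · exact absurd hQu (h' u hu)

open Classical in
lemma miss_update {e : Sym2 V} {b : κ} {u : V} {a : κ} (h : Miss c u a) (he : u ∉ e) :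
    Miss (Function.update c e (some b)) u a := by
  intro v
  have : s(u, v) ≠ e := by
    rintro rfl
    exact he (Sym2.mem_mk_left u v)
  rw [Function.update_of_ne this]
  exact h v

open Classical in
lemma PartialColouring.update (hc : PartialColouring G c) {y : V} {a : κ} (hxy : G.Adj x y)
    (hx : Miss c x a) (hy : Miss c y a) :
    PartialColouring G (Function.update c s(x, y) (some a)) := by
  constructor
  · intro u v b h
    by_cases he : s(u, v) = s(x, y)
    · rw [← SimpleGraph.mem_edgeSet, he]
      exact hxy
    · rw [Function.update_of_ne he] at h
      exact hc.edge u v b h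
  · intro u v v' b
    have key : ∀ v v', s(u, v) = s(x, y) → s(u, v') ≠ s(x, y) →
        Function.update c s(x, y) (some a) s(u, v) = some b →
        Function.update c s(x, y) (some a) s(u, v') = some b → False := by
      clear v v'
      intro v v' he he' h h'
      rw [Function.update_of_ne he'] at h'
      rw [he, Function.update_self, Option.some_inj] at h
      subst h
      rcases Sym2.eq_iff.1 he with ⟨rfl, rfl⟩ | ⟨rfl, rfl⟩
      · exact hx v' h'
      · exact hy v' h'
    intro h h'
    by_cases he : s(u, v) = s(x, y) <;> by_cases he' : s(u, v') = s(x, y)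
    · exact Sym2.congr_right.1 (he.trans he'.symm)
    · exact (key v v' he he' h h').elim
    · exact (key v' v he' he h' h).elim
    · rw [Function.update_of_ne he] at h
      rw [Function.update_of_ne he'] at h'
      exact hc.proper u v v' b h h'

/-- Shifting a fan: if a colour is missing both at the centre and at the last vertex, it can be
given to the last edge, which frees the previous colour of that edge for the one before, and so
on; in the end `x y₀` receives a colour. -/
lemma Fan.shift {l : List V} : ∀ {c : Sym2 V → Option κ} {y : V} {b : κ}, Fan c x y₀ y l →
    PartialColouring G c → G.Adj x y₀ → Miss c x b → Miss c y b →
    ∃ c' : Sym2 V → Option κ, PartialColouring G c' ∧ c' s(x, y₀) ≠ none ∧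
      ∀ e, c e ≠ none → c' e ≠ none := by
  classical
  induction l with
  | nil =>
    intro c y b hF hc hx hxb hyb
    cases hF
    refine ⟨_, hc.update hx hxb hyb, by simp, ?_⟩
    intro e he
    by_cases h : e = s(x, y₀)
    · simp [h]
    · rwa [Function.update_of_ne h]
  | cons z l ih =>
    intro c y b hF hc hx hxb hyb
    cases hF with
    | @step _ _ _ a hF hya hza hyl =>
    have hxy := hc.edge x y a hya
    have hab : a ≠ b := by
      rintro rfl
      exact hxb y hya
    have hxz : x ≠ z := by
      rintro rfl
      exact hza y hya
    have hmem : ∀ u ∈ z :: l, u ≠ x → u ∉ s(x, y) := by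
      intro u hu hux h
      rcases Sym2.mem_iff.1 h with h | h
      · exact hux h
      · exact hyl (h ▸ hu)
    obtain ⟨c', h1, h2, h3⟩ := ih (c := Function.update c s(x, y) (some b)) (y := z) (b := a)
      (hF.mono (by
        intro v hv u hu d hd hm
        have hvy : s(x, v) ≠ s(x, y) := fun h => hyl (Sym2.congr_right.1 h ▸ hv)
        refine ⟨d, by rwa [Function.update_of_ne hvy], miss_update hm
          (hmem u (List.mem_cons_of_mem _ hu) ?_)⟩
        rintro rfl
        exact hm v hd))
      (hc.update hxy hxb hyb) hx
      (by
        intro v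
        by_cases h : s(x, v) = s(x, y)
        · rw [h, Function.update_self]
          simpa using hab.symm
        · rw [Function.update_of_ne h]
          exact fun h' => h (by rw [hc.proper x v y a h' hya]))
      (miss_update hza (hmem z List.mem_cons_self hxz.symm))
    refine ⟨c', h1, h2, fun e he => h3 e ?_⟩
    by_cases h : e = s(x, y)
    · simp [h]
    · rwa [Function.update_of_ne h]

/-- The graph formed by the edges of colour `a` or `b`. -/
def kempe (hc : PartialColouring G c) (a b : κ) : SimpleGraph V where
  Adj u v := c s(u, v) = some a ∨ c s(u, v) = some b
  symm := ⟨fun u v h => by rwa [Sym2.eq_swap]⟩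
  loopless := ⟨fun u h => h.elim (fun h => (hc.edge u u a h).ne rfl)
    (fun h => (hc.edge u u b h).ne rfl)⟩

/-- A connected component of the graph of the colours `a` and `b` is a path or a cycle, hence
contains at most two vertices missing one of the two colours. -/
lemma kempe_three [Fintype V] (hc : PartialColouring G c) {a b : κ} {x y z : V} (hxy : x ≠ y)
    (hxz : x ≠ z) (hyz : y ≠ z) (hx : Miss c x a) (hy : Miss c y b) (hz : Miss c z b)
    (h1 : (kempe hc a b).Reachable x y) (h2 : (kempe hc a b).Reachable x z) : False := by
  classical
  let C := (kempe hc a b).connectedComponentMk x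
  have hconn := C.connected_toSimpleGraph
  have hE := hconn.card_vert_le_card_edgeSet_add_one
  have hx' : x ∈ C.supp := rfl
  have hy' : y ∈ C.supp := (SimpleGraph.ConnectedComponent.sound h1).symm
  have hz' : z ∈ C.supp := (SimpleGraph.ConnectedComponent.sound h2).symm
  have hsum := C.toSimpleGraph.sum_degrees_eq_twice_card_edges
  have hdeg : ∀ u : C, C.toSimpleGraph.degree u ≤
      (({some a, some b} : Finset (Option κ)).filter fun o => ∃ v, c s(u.1, v) = o).card := by
    intro u
    rw [← SimpleGraph.card_neighborFinset_eq_degree]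
    refine Finset.card_le_card_of_injOn (fun v => c s(u.1, v.1)) ?_ ?_
    · intro v hv
      rw [Finset.mem_coe, SimpleGraph.mem_neighborFinset] at hv
      have hv' : c s(u.1, v.1) = some a ∨ c s(u.1, v.1) = some b := hv
      rw [Finset.mem_coe, Finset.mem_filter]
      exact ⟨by simpa using hv', v.1, rfl⟩
    · intro v hv v' hv' h
      rw [Finset.mem_coe, SimpleGraph.mem_neighborFinset] at hv
      have h' : c s(u.1, v.1) = some a ∨ c s(u.1, v.1) = some b := hv
      simp only at h
      apply Subtype.ext
      rcases h' with h' | h'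
      · exact hc.proper _ _ _ a h' (h ▸ h')
      · exact hc.proper _ _ _ b h' (h ▸ h')
  have hcard : ({some a, some b} : Finset (Option κ)).card ≤ 2 := Finset.card_le_two
  have hdeg2 : ∀ u : C, C.toSimpleGraph.degree u ≤ 2 := fun u =>
    (hdeg u).trans ((Finset.card_filter_le _ _).trans hcard)
  have hdeg1 : ∀ u : C, ∀ d, (d = a ∨ d = b) → Miss c u.1 d → C.toSimpleGraph.degree u ≤ 1 := by
    intro u d hd hm
    have : some d ∉ ({some a, some b} : Finset (Option κ)).filter fun o => ∃ v, c s(u.1, v) = o := by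
      rw [Finset.mem_filter]
      rintro ⟨-, v, hv⟩
      exact hm v hv
    have hlt := Finset.card_lt_card (Finset.ssubset_iff_subset_ne.2 ⟨Finset.filter_subset _ _,
      fun h => this (h.symm ▸ (by simpa using hd))⟩)
    have := hdeg u
    omega
  let A : Finset C := {⟨x, hx'⟩, ⟨y, hy'⟩, ⟨z, hz'⟩}
  have hA : A.card = 3 := by
    refine Finset.card_eq_three.2 ⟨_, _, _, ?_, ?_, ?_, rfl⟩ <;> simpa
  have hle : ∑ u : C, C.toSimpleGraph.degree u + ∑ u : C, (if u ∈ A then 1 else 0) ≤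
      ∑ u : C, 2 := by
    rw [← Finset.sum_add_distrib]
    refine Finset.sum_le_sum fun u _ => ?_
    split_ifs with hu
    · have : C.toSimpleGraph.degree u ≤ 1 := by
        simp only [A, Finset.mem_insert, Finset.mem_singleton] at hu
        rcases hu with rfl | rfl | rfl
        · exact hdeg1 _ a (Or.inl rfl) hx
        · exact hdeg1 _ b (Or.inr rfl) hy
        · exact hdeg1 _ b (Or.inr rfl) hz
      omega
    · exact hdeg2 u
  rw [Finset.sum_ite_mem, Finset.univ_inter, Finset.sum_const, hA, Finset.sum_const,
    Finset.card_univ, hsum] at hle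
  rw [Nat.card_eq_fintype_card, Nat.card_eq_fintype_card, ← SimpleGraph.edgeFinset_card] at hE
  simp only [smul_eq_mul] at hle
  omega

open Classical in
/-- Exchanging the colours `a` and `b` on the edges meeting the set `K`. -/
noncomputable def kempeSwap (c : Sym2 V → Option κ) (a b : κ) (K : Set V) : Sym2 V → Option κ :=
  fun e => if ∃ v ∈ e, v ∈ K then (c e).map (Equiv.swap a b) else c e

section Swap

variable {hc : PartialColouring G c} {a b : κ} {K : Set V}

open Classical in
/-- Provided that `K` is closed under the edges of colours `a` and `b`, whether a colour is
exchanged can be read off from either end. -/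
lemma kempeSwap_apply (hK : ∀ u ∈ K, ∀ v, (kempe hc a b).Adj u v → v ∈ K) (u v : V) :
    kempeSwap c a b K s(u, v) = if u ∈ K then (c s(u, v)).map (Equiv.swap a b) else c s(u, v) := by
  unfold kempeSwap
  by_cases hu : u ∈ K
  · rw [if_pos ⟨u, Sym2.mem_mk_left u v, hu⟩, if_pos hu]
  rw [if_neg hu]
  by_cases hv : v ∈ K
  · rw [if_pos ⟨v, Sym2.mem_mk_right u v, hv⟩]
    have h : ¬ (kempe hc a b).Adj u v := fun h => hu (hK v hv u h.symm)
    have h' : ¬ (c s(u, v) = some a ∨ c s(u, v) = some b) := h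
    push Not at h'
    cases hd : c s(u, v) with
    | none => rfl
    | some d =>
      rw [hd] at h'
      rw [Option.map_some, Equiv.swap_apply_of_ne_of_ne (by simpa using h'.1) (by simpa using h'.2)]
  · rw [if_neg]
    rintro ⟨z, hz, hzK⟩
    rcases Sym2.mem_iff.1 hz with rfl | rfl
    · exact hu hzK
    · exact hv hzK

open Classical in
lemma kempeSwap_eq_some (hK : ∀ u ∈ K, ∀ v, (kempe hc a b).Adj u v → v ∈ K) (u v : V) (d : κ) :
    kempeSwap c a b K s(u, v) = some d ↔
      c s(u, v) = some (if u ∈ K then Equiv.swap a b d else d) := by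
  rw [kempeSwap_apply hK]
  split_ifs
  · rw [Option.map_eq_some_iff]
    constructor
    · rintro ⟨d', h, rfl⟩
      rwa [Equiv.swap_apply_self]
    · intro h
      exact ⟨_, h, Equiv.swap_apply_self _ _ _⟩
  · rfl

lemma PartialColouring.kempeSwap (hK : ∀ u ∈ K, ∀ v, (kempe hc a b).Adj u v → v ∈ K) :
    PartialColouring G (kempeSwap c a b K) := by
  constructor
  · intro u v d h
    rw [kempeSwap_eq_some hK] at h
    exact hc.edge _ _ _ h
  · intro u v v' d h h'
    rw [kempeSwap_eq_some hK] at h h'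
    exact hc.proper _ _ _ _ h h'

open Classical in
lemma miss_kempeSwap (hK : ∀ u ∈ K, ∀ v, (kempe hc a b).Adj u v → v ∈ K) {u : V} {d : κ} :
    Miss (kempeSwap c a b K) u d ↔ Miss c u (if u ∈ K then Equiv.swap a b d else d) := by
  unfold Miss
  simp only [ne_eq, kempeSwap_eq_some hK]

lemma kempeSwap_eq_none {e : Sym2 V} : _root_.kempeSwap c a b K e = none ↔ c e = none := by
  unfold _root_.kempeSwap
  split_ifs
  · exact Option.map_eq_none_iff
  · rfl

end Swap

/-- A partial colouring in which every vertex misses a colour can be modified so as to colour one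
further prescribed edge. -/
lemma exists_extension [Fintype V] (hc : PartialColouring G c) (hmiss : ∀ u, ∃ a, Miss c u a)
    (hx : G.Adj x y₀) (h₀ : c s(x, y₀) = none) :
    ∃ c' : Sym2 V → Option κ, PartialColouring G c' ∧ c' s(x, y₀) ≠ none ∧
      ∀ e, c e ≠ none → c' e ≠ none := by
  classical
  -- a maximal fan
  obtain ⟨y, l, hF, hmax⟩ : ∃ y l, Fan c x y₀ y l ∧ ∀ z, ¬ Fan c x y₀ z (y :: l) := by
    by_contra hcon
    push Not at hcon
    have : ∀ n : ℕ, ∃ y l, Fan c x y₀ y l ∧ l.length = n := by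
      intro n
      induction n with
      | zero => exact ⟨y₀, [], .base, rfl⟩
      | succ n ih =>
        obtain ⟨y, l, hF, hl⟩ := ih
        obtain ⟨z, hz⟩ := hcon y l hF
        exact ⟨z, _, hz, by simp [hl]⟩
    obtain ⟨y, l, hF, hl⟩ := this (Fintype.card V)
    have := hF.nodup.length_le_card
    simp only [List.length_cons] at this
    omega
  obtain ⟨a, ha⟩ := hmiss x
  obtain ⟨b, hb⟩ := hmiss y
  by_cases hxb : Miss c x b
  · exact hF.shift hc hx hxb hb
  have hxb' := hxb
  unfold Miss at hxb'
  push Not at hxb'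
  obtain ⟨z, hz⟩ := hxb'
  have hzl : z ∈ y :: l := by
    by_contra h
    exact hmax z (.step hF hz hb h)
  obtain ⟨p, hp, hpb⟩ := hF.exists_pred h₀ hzl hz
  have hne : ∀ u, Miss c u b → x ≠ u := by
    rintro u hu rfl
    exact hxb hu
  let K : Set V := {v | (kempe hc a b).Reachable x v}
  have hK : ∀ u ∈ K, ∀ v, (kempe hc a b).Adj u v → v ∈ K :=
    fun u hu v huv => SimpleGraph.Reachable.trans hu huv.reachable
  have hxK : x ∈ K := SimpleGraph.Reachable.refl x
  have hQ : ∃ u ∈ y :: l, Miss c u b ∧ u ∉ K := by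
    by_contra hcon
    push Not at hcon
    exact kempe_three hc (hne p hpb) (hne y hb) (fun h => hF.notMem (h ▸ hp)) ha hpb hb
      (hcon p (List.mem_cons_of_mem _ hp) hpb) (hcon y List.mem_cons_self hb)
  obtain ⟨u, l', hF', ⟨hub, huK⟩, hl'⟩ := hF.exists_first _ hQ
  have hF'' : Fan (kempeSwap c a b K) x y₀ u l' := by
    refine hF'.mono ?_
    intro v _ t ht d hd hm
    have hda : d ≠ a := by
      rintro rfl
      exact ha v hd
    refine ⟨Equiv.swap a b d, ?_, ?_⟩
    · rw [kempeSwap_eq_some hK, if_pos hxK, Equiv.swap_apply_self, hd]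
    · rw [miss_kempeSwap hK]
      split_ifs with h
      · rwa [Equiv.swap_apply_self]
      · by_cases hdb : d = b
        · subst hdb
          exact absurd ⟨hm, h⟩ (hl' t ht)
        · rwa [Equiv.swap_apply_of_ne_of_ne hda hdb]
  obtain ⟨c', h1, h2, h3⟩ := hF''.shift (PartialColouring.kempeSwap hK) hx (b := b)
    (by rwa [miss_kempeSwap hK, if_pos hxK, Equiv.swap_apply_right])
    (by rwa [miss_kempeSwap hK, if_neg huK])
  exact ⟨c', h1, h2, fun e he => h3 e fun h => he (kempeSwap_eq_none.1 h)⟩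

/-- Vizing's theorem. -/
theorem exists_edge_colouring [Fintype V] (G : SimpleGraph V) {Δ : ℕ}
    (hΔ : ∀ v : V, (G.neighborSet v).ncard ≤ Δ) :
    ∃ f : Sym2 V → Fin (Δ + 1), ∀ u v v', G.Adj u v → G.Adj u v' →
      f s(u, v) = f s(u, v') → v = v' := by
  classical
  obtain ⟨c, hc, hmax⟩ := Finset.exists_max_image
    (Finset.univ.filter fun c : Sym2 V → Option (Fin (Δ + 1)) => PartialColouring G c)
    (fun c => (Finset.univ.filter fun e => c e ≠ none).card)
    ⟨fun _ => none, by simpa using ⟨by simp, by simp⟩⟩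
  replace hc := (Finset.mem_filter.1 hc).2
  have hmiss : ∀ u, ∃ a, Miss c u a := by
    intro u
    by_contra hcon
    unfold Miss at hcon
    push Not at hcon
    choose g hg using hcon
    have hinj : Function.Injective g := by
      intro i j hij
      have := hg i
      rw [hij, hg j, Option.some_inj] at this
      exact this.symm
    have h1 : (Set.range g).ncard ≤ (G.neighborSet u).ncard := by
      refine Set.ncard_le_ncard ?_ (Set.toFinite _)
      rintro _ ⟨i, rfl⟩
      exact hc.edge _ _ _ (hg i)
    rw [← Nat.card_coe_set_eq, Nat.card_range_of_injective hinj, Nat.card_eq_fintype_card,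
      Fintype.card_fin] at h1
    have := hΔ u
    omega
  have htotal : ∀ u v, G.Adj u v → c s(u, v) ≠ none := by
    intro u v huv hnone
    obtain ⟨c', h1, h2, h3⟩ := exists_extension hc hmiss huv hnone
    have := hmax c' (Finset.mem_filter.2 ⟨Finset.mem_univ _, h1⟩)
    refine absurd this (not_le.2 (Finset.card_lt_card ?_))
    refine (Finset.ssubset_iff_of_subset ?_).2 ⟨s(u, v), by simpa using h2, by simpa using hnone⟩
    intro e he
    simp only [Finset.mem_filter, Finset.mem_univ, true_and] at he ⊢
    exact h3 e he
  refine ⟨fun e => (c e).getD 0, ?_⟩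
  intro u v v' huv huv' h
  obtain ⟨i, hi⟩ := Option.ne_none_iff_exists'.1 (htotal u v huv)
  obtain ⟨j, hj⟩ := Option.ne_none_iff_exists'.1 (htotal u v' huv')
  simp only [hi, hj, Option.getD_some] at h
  exact hc.proper u v v' j (h ▸ hi) hj

end Vizing

/-! ### Induced matchings of large weight -/

section Matching

variable {V : Type} {G : SimpleGraph V}

/-- A clique minor of the square of the line graph, restricted to the edges of a matching, yields
a clique minor of `G`: the new branch sets consist of the end vertices of the edges in the old
ones. -/
lemma hasCliqueMinor_of_matching {M : Set G.edgeSet}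
    (hM : ∀ e ∈ M, ∀ f ∈ M, ∀ x, x ∈ (e : Sym2 V) → x ∈ (f : Sym2 V) → e = f) {k : ℕ}
    (h : HasCliqueMinor ((lineSq G).induce M) k) : HasCliqueMinor G k := by
  obtain ⟨S, hconn, hdisj, hadj⟩ := h
  have hlink : ∀ e f : G.edgeSet, (lineSq G).Adj e f →
      (∃ x, x ∈ (e : Sym2 V) ∧ x ∈ (f : Sym2 V)) ∨
        ∃ x y, x ∈ (e : Sym2 V) ∧ y ∈ (f : Sym2 V) ∧ G.Adj x y := by
    intro e f hef
    rw [lineSq, SimpleGraph.fromRel_adj] at hef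
    rcases hef.2 with h | ⟨x, h1, h2⟩ | ⟨x, y, h1, h2, h3⟩
    · exact h
    · exact Or.inl ⟨x, h2, h1⟩
    · exact Or.inr ⟨y, x, h2, h1, h3.symm⟩
  refine ⟨fun i => {x | ∃ e ∈ S i, x ∈ (e.1 : Sym2 V)}, ?_, ?_, ?_⟩
  · intro i
    set T : Set V := {x | ∃ e ∈ S i, x ∈ (e.1 : Sym2 V)} with hT
    have hedge : ∀ e : S i, ∀ x y : T, x.1 ∈ (e.1.1 : Sym2 V) → y.1 ∈ (e.1.1 : Sym2 V) →
        (G.induce T).Reachable x y := by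
      intro e x y hx hy
      by_cases hxy : x = y
      · rw [hxy]
      · refine SimpleGraph.Adj.reachable ?_
        have hE := e.1.1.2
        rw [(Sym2.mem_and_mem_iff (fun h => hxy (Subtype.ext h))).1 ⟨hx, hy⟩] at hE
        exact hE
    have key : ∀ e f : S i, (((lineSq G).induce M).induce (S i)).Reachable e f →
        ∀ x y : T, x.1 ∈ (e.1.1 : Sym2 V) → y.1 ∈ (f.1.1 : Sym2 V) →
        (G.induce T).Reachable x y := by
      intro e f hef
      rw [SimpleGraph.reachable_iff_reflTransGen] at hef
      induction hef with
      | refl => exact hedge e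
      | @tail f g _ hfg ih =>
        intro x y hx hy
        rcases hlink f.1.1 g.1.1 hfg with ⟨z, h1, h2⟩ | ⟨u, v, h1, h2, h3⟩
        · have hz : z ∈ T := ⟨f.1, f.2, h1⟩
          exact (ih x ⟨z, hz⟩ hx h1).trans (hedge g ⟨z, hz⟩ y h2 hy)
        · have hu : u ∈ T := ⟨f.1, f.2, h1⟩
          have hv : v ∈ T := ⟨g.1, g.2, h2⟩
          have huv : (G.induce T).Adj ⟨u, hu⟩ ⟨v, hv⟩ := h3
          exact ((ih x ⟨u, hu⟩ hx h1).trans huv.reachable).trans (hedge g ⟨v, hv⟩ y h2 hy)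
    have hne : Nonempty T := by
      obtain ⟨e⟩ := (hconn i).nonempty
      exact ⟨⟨(e.1.1 : Sym2 V).out.1, e.1, e.2, Sym2.out_fst_mem _⟩⟩
    refine SimpleGraph.Connected.mk ?_
    rintro ⟨x, e, he, hx⟩ ⟨y, f, hf, hy⟩
    exact key ⟨e, he⟩ ⟨f, hf⟩ ((hconn i).preconnected _ _) _ _ hx hy
  · intro i j hij
    rw [Set.disjoint_left]
    rintro x ⟨e, he, hx⟩ ⟨f, hf, hx'⟩
    have hef : e = f := Subtype.ext (hM e.1 e.2 f.1 f.2 x hx hx')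
    exact Set.disjoint_left.1 (hdisj i j hij) he (hef ▸ hf)
  · intro i j hij
    obtain ⟨e, he, f, hf, hef⟩ := hadj i j hij
    rcases hlink e.1 f.1 hef with ⟨x, h1, h2⟩ | ⟨x, y, h1, h2, h3⟩
    · exact absurd (Subtype.ext (hM e.1 e.2 f.1 f.2 x h1 h2)) hef.ne
    · exact ⟨x, ⟨e, he, h1⟩, y, ⟨f, hf, h2⟩, h3⟩

/-- Some colour class of an edge colouring with `Δ + 1` colours is a matching carrying at least
a `1 / (Δ + 1)` fraction of the weight, and inside that matching the theorem of Reed and Seymour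
provides a stable set of `lineSq G`. -/
lemma exists_heavy_induced_matching [Fintype V] [Fintype G.edgeSet] {k Δ : ℕ} (hk : 2 ≤ k)
    (hminor : ¬ HasCliqueMinor G k) (hΔ : ∀ v : V, (G.neighborSet v).ncard ≤ Δ)
    {w : G.edgeSet → ℝ} (hw : ∀ e, 0 ≤ w e) :
    ∃ I : Finset G.edgeSet, Stab (lineSq G) I ∧
      ∑ e, w e ≤ 2 * ((k : ℝ) - 1) * ((Δ : ℝ) + 1) * ∑ e ∈ I, w e := by
  classical
  obtain ⟨f, hf⟩ := exists_edge_colouring G hΔ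
  obtain ⟨i, -, hi⟩ := Finset.exists_max_image (Finset.univ : Finset (Fin (Δ + 1)))
    (fun i => ∑ e ∈ Finset.univ.filter (fun e : G.edgeSet => f e = i), w e) Finset.univ_nonempty
  have h1 : ∑ e, w e ≤
      ((Δ : ℝ) + 1) * ∑ e ∈ Finset.univ.filter (fun e : G.edgeSet => f e = i), w e := by
    have h2 := Finset.sum_le_card_nsmul Finset.univ _ _ hi
    rw [Finset.sum_fiberwise Finset.univ (fun e : G.edgeSet => f e) w, Finset.card_univ,
      Fintype.card_fin, nsmul_eq_mul, Nat.cast_add, Nat.cast_one] at h2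
    exact h2
  set M : Set G.edgeSet := {e | f e = i} with hMdef
  have hM : ∀ e ∈ M, ∀ f ∈ M, ∀ x, x ∈ (e : Sym2 V) → x ∈ (f : Sym2 V) → e = f := by
    rintro ⟨e, he⟩ heM ⟨g, hg⟩ hgM x hxe hxg
    obtain ⟨v, rfl⟩ := Sym2.mem_iff_exists.1 hxe
    obtain ⟨v', rfl⟩ := Sym2.mem_iff_exists.1 hxg
    have : v = v' := hf x v v' he hg (Eq.trans heM (Eq.symm hgM))
    subst this
    rfl
  obtain ⟨I, hI, hIw⟩ := exists_stable_of_not_hasCliqueMinor (G := (lineSq G).induce M) hk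
    (fun h => hminor (hasCliqueMinor_of_matching hM h)) (w := fun e => w e.1) (fun e => hw e.1)
  refine ⟨I.map (Function.Embedding.subtype _), ?_, ?_⟩
  · intro a ha b hb hab
    obtain ⟨a', ha', rfl⟩ := Finset.mem_map.1 ha
    obtain ⟨b', hb', rfl⟩ := Finset.mem_map.1 hb
    exact hI a' ha' b' hb' hab
  · rw [Finset.sum_map]
    have h3 : ∑ e ∈ Finset.univ.filter (fun e : G.edgeSet => f e = i), w e =
        ∑ e : M, w e.1 := Finset.sum_subtype _ (by simp [hMdef]) w
    have h4 : (0 : ℝ) ≤ (Δ : ℝ) + 1 := by positivity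
    rw [h3] at h1
    calc ∑ e, w e ≤ ((Δ : ℝ) + 1) * ∑ e : M, w e.1 := h1
      _ ≤ ((Δ : ℝ) + 1) * (2 * ((k : ℝ) - 1) * ∑ e ∈ I, w e.1) :=
        mul_le_mul_of_nonneg_left hIw h4
      _ = _ := by
        simp only [Function.Embedding.subtype_apply]
        ring

end Matching

/-! ### Linear programming duality -/

/-- If for every weighting some stable set carries at least a `1 / c` fraction of the weight, then
the fractional chromatic number is at most `c`.  Otherwise a hyperplane separates the convex hull
of the indicator vectors of stable sets from the vectors with all coordinates at least `1 / c`,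
and its normal vector is a weighting violating the hypothesis. -/
lemma fracChrom_le {α : Type} [Fintype α] {H : SimpleGraph α} {c : ℝ} (hc : 0 < c)
    (h : ∀ w : α → ℝ, (∀ v, 0 ≤ w v) →
      ∃ I : Finset α, Stab H I ∧ ∑ v, w v ≤ c * ∑ v ∈ I, w v) : fracChrom H ≤ c := by
  classical
  let ind : Finset α → α → ℝ := fun I v => if v ∈ I then 1 else 0
  let A : Set (α → ℝ) := ind '' {I | Stab H I}
  let B : Set (α → ℝ) := Set.Ici fun _ => 1 / c
  have hnd : ¬ Disjoint (convexHull ℝ A) B := by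
    intro hd
    obtain ⟨f, s, t, hA, hst, hB⟩ := geometric_hahn_banach_compact_closed (convex_convexHull ℝ A)
      ((Set.toFinite A).isCompact_convexHull (𝕜 := ℝ)) (convex_Ici _) isClosed_Ici hd
    have hf : ∀ x : α → ℝ, f x = ∑ v, x v * f (Pi.single v 1) := by
      intro x
      have := LinearMap.pi_apply_eq_sum_univ (f : (α → ℝ) →ₗ[ℝ] ℝ) x
      simp only [smul_eq_mul] at this
      refine this.trans (Finset.sum_congr rfl fun v _ => ?_)
      have hsingle : (fun u => if v = u then (1 : ℝ) else 0) = Pi.single v 1 := by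
        ext u
        simp [Pi.single_apply, eq_comm]
      rw [hsingle]
      rfl
    have hw : ∀ v, 0 ≤ f (Pi.single v 1) := by
      intro v
      by_contra hneg
      push Not at hneg
      have hb := hB (fun _ => 1 / c) (Set.mem_Ici.2 le_rfl)
      -- far enough in direction `v` the functional falls back to the value `t`
      have hr : 0 ≤ (f (fun _ => 1 / c) - t) / (-f (Pi.single v 1)) :=
        div_nonneg (by linarith) (by linarith)
      have := hB ((fun _ => 1 / c) + ((f (fun _ => 1 / c) - t) / (-f (Pi.single v 1))) •
        Pi.single v 1) (Set.mem_Ici.2 (le_add_of_nonneg_right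
          (smul_nonneg hr (Pi.single_nonneg.2 zero_le_one))))
      rw [map_add, map_smul, smul_eq_mul, div_neg, neg_mul, div_mul_cancel₀ _ hneg.ne] at this
      linarith
    obtain ⟨I, hI, hIw⟩ := h (fun v => f (Pi.single v 1)) hw
    have h1 := hA (ind I) (subset_convexHull ℝ A ⟨I, hI, rfl⟩)
    have h2 := hB (fun _ => 1 / c) (Set.mem_Ici.2 le_rfl)
    rw [hf] at h1 h2
    rw [← Finset.mul_sum] at h2
    have h3 : ∑ v, ind I v * f (Pi.single v 1) = ∑ v ∈ I, f (Pi.single v 1) := by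
      simp [ind, Finset.sum_ite_mem]
    rw [h3] at h1
    have h4 : 1 / c * ∑ v, f (Pi.single v 1) ≤ ∑ v ∈ I, f (Pi.single v 1) := by
      rw [div_mul_eq_mul_div, one_mul, div_le_iff₀ hc]
      linarith
    linarith
  obtain ⟨x, hxA, hxB⟩ := Set.not_disjoint_iff.1 hnd
  obtain ⟨ι, _, p, z, hp, hp1, hz, hzx⟩ := mem_convexHull_iff_exists_fintype.1 hxA
  choose I hI hIz using hz
  let e := (Fintype.equivFin ι).symm
  refine csInf_le ?_ ⟨Fintype.card ι, fun i => (I (e i) : Set α), fun i => c * p (e i),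
    fun i => mul_nonneg hc.le (hp _), fun i => hI (e i), ?_, ?_⟩
  · refine ⟨0, ?_⟩
    rintro _ ⟨n, J, w, hw, -, -, rfl⟩
    exact Finset.sum_nonneg fun i _ => hw i
  · intro v
    have hxv : 1 / c ≤ x v := hxB v
    rw [div_le_iff₀ hc] at hxv
    have : x v = ∑ i, Set.indicator (I i : Set α) (fun _ => p i) v := by
      rw [← hzx, Finset.sum_apply]
      refine Finset.sum_congr rfl fun i _ => ?_
      rw [← hIz i]
      simp [ind, Set.indicator_apply]
    rw [Equiv.sum_comp e fun i => Set.indicator (I i : Set α) (fun _ => c * p i) v]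
    refine hxv.trans_eq ?_
    rw [this, Finset.sum_mul]
    refine Finset.sum_congr rfl fun i _ => ?_
    simp only [Set.indicator_apply]
    split_ifs <;> ring
  · rw [Equiv.sum_comp e fun i => c * p i, ← Finset.mul_sum, hp1, mul_one]

/-- Any `K_k`-minor-free finite simple graph of maximum degree `Δ` has fractional strong
chromatic index at most `2(k-1)(Δ+1)`. -/
theorem stmt_6 (k : ℕ) (hk : 2 ≤ k) {V : Type} [Fintype V] (G : SimpleGraph V)
    (hminor : ¬ HasCliqueMinor G k)
    (Δ : ℕ) (hΔ : ∀ v : V, (G.neighborSet v).ncard ≤ Δ) :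
    fracChrom (lineSq G) ≤ 2 * ((k : ℝ) - 1) * ((Δ : ℝ) + 1) := by
  classical
  have hk' : (2 : ℝ) ≤ k := by exact_mod_cast hk
  have hc : 0 < 2 * ((k : ℝ) - 1) * ((Δ : ℝ) + 1) :=
    mul_pos (by linarith) (by positivity)
  exact fracChrom_le hc fun w hw => exists_heavy_induced_matching hk hminor hΔ hw
end

section
/- For any K₄-minor-free multigraph G of maximum degree Δ, the strong chromatic index of G satisfies χ₂'(G) ≤ 3Δ. -/
/-- The square of the line graph of the multigraph with edge type `E` and endpoint map
`ends`: vertices are the edges, two distinct edges being adjacent when they are incident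
or joined by an edge. -/
def mLineSq {V E : Type} (ends : E → Sym2 V) : SimpleGraph E :=
  SimpleGraph.fromRel fun e f =>
    (∃ x, x ∈ ends e ∧ x ∈ ends f) ∨
    ∃ x y, x ∈ ends e ∧ y ∈ ends f ∧ ∃ g, ends g = s(x, y)


section

variable {V : Type}

/-! ### Contraction and clique minors -/

/-- The graph obtained by contracting `p` into `a`: the vertex `p` becomes isolated and `a`
inherits its neighbours.  The vertex type is kept. -/
def contractInto (G : SimpleGraph V) (p a : V) : SimpleGraph V where
  Adj u v := u ≠ v ∧ u ≠ p ∧ v ≠ p ∧ (G.Adj u v ∨ (u = a ∧ G.Adj p v) ∨ (v = a ∧ G.Adj p u))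
  symm := ⟨fun _ _ h => ⟨h.1.symm, h.2.2.1, h.2.1, h.2.2.2.elim (fun h => Or.inl h.symm)
    (fun h => Or.inr h.symm)⟩⟩
  loopless := ⟨fun _ h => h.1 rfl⟩

theorem contractInto_adj (G : SimpleGraph V) (p a u v : V) :
    (contractInto G p a).Adj u v ↔ u ≠ v ∧ u ≠ p ∧ v ≠ p ∧
      (G.Adj u v ∨ (u = a ∧ G.Adj p v) ∨ (v = a ∧ G.Adj p u)) := Iff.rfl

theorem HasCliqueMinor.mono {G H : SimpleGraph V} (hGH : G ≤ H) {k : ℕ}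
    (h : HasCliqueMinor G k) : HasCliqueMinor H k := by
  obtain ⟨S, h1, h2, h3⟩ := h
  refine ⟨S, fun i => (h1 i).mono ?_, h2, fun i j hij => ?_⟩
  · intro u v huv
    exact hGH huv
  · obtain ⟨u, hu, v, hv, huv⟩ := h3 i j hij
    exact ⟨u, hu, v, hv, hGH huv⟩

theorem hasCliqueMinor_four {G : SimpleGraph V} {a b c d : V} (hab : G.Adj a b)
    (hac : G.Adj a c) (had : G.Adj a d) (hbc : G.Adj b c) (hbd : G.Adj b d) (hcd : G.Adj c d) :
    HasCliqueMinor G 4 := by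
  have key : ∀ i j : Fin 4, i ≠ j → G.Adj (![a, b, c, d] i) (![a, b, c, d] j) := by
    intro i j hij
    fin_cases i <;> fin_cases j <;>
      first
        | exact absurd rfl hij
        | (simp [hab, hac, had, hbc, hbd, hcd, hab.symm, hac.symm, had.symm, hbc.symm,
            hbd.symm, hcd.symm])
  refine ⟨fun i => {![a, b, c, d] i}, fun i => ?_, fun i j hij => ?_, fun i j hij => ?_⟩
  · exact SimpleGraph.Connected.of_subsingleton
  · exact Set.disjoint_singleton.2 (key i j hij).ne
  · exact ⟨_, rfl, _, rfl, key i j hij⟩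

/-- A clique minor of a contraction lifts: `p` is added to the branch set containing `a`. -/
theorem HasCliqueMinor.of_contractInto {G : SimpleGraph V} {p a : V} (hpa : G.Adj p a)
    (h : HasCliqueMinor (contractInto G p a) 4) : HasCliqueMinor G 4 := by
  classical
  obtain ⟨S, h1, h2, h3⟩ := h
  -- `p` is isolated in the contraction, so it lies in no branch set
  have hp : ∀ i, p ∉ S i := by
    intro i hpi
    obtain ⟨j, hij⟩ := exists_ne i
    obtain ⟨u, hu, v, hv, huv⟩ := h3 i j hij.symm
    have hr := (h1 i).preconnected ⟨p, hpi⟩ ⟨u, hu⟩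
    rw [SimpleGraph.reachable_iff_reflTransGen] at hr
    rcases Relation.ReflTransGen.cases_head hr with h | ⟨w, hw, -⟩
    · exact huv.2.1 (congrArg Subtype.val h).symm
    · exact hw.2.1 rfl
  let T : Fin 4 → Set V := fun i => {u | u ∈ S i ∨ (u = p ∧ a ∈ S i)}
  have hST : ∀ i, S i ⊆ T i := fun i u hu => Or.inl hu
  refine ⟨T, fun i => ?_, fun i j hij => ?_, fun i j hij => ?_⟩
  · have reach : ∀ u v (hu : u ∈ S i) (hv : v ∈ S i),
        (G.induce (T i)).Reachable ⟨u, hST i hu⟩ ⟨v, hST i hv⟩ := by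
      intro u v hu hv
      have hr := (h1 i).preconnected ⟨u, hu⟩ ⟨v, hv⟩
      rw [SimpleGraph.reachable_iff_reflTransGen] at hr
      have : ∀ w : S i, Relation.ReflTransGen ((contractInto G p a).induce (S i)).Adj ⟨u, hu⟩ w →
          (G.induce (T i)).Reachable ⟨u, hST i hu⟩ ⟨w, hST i w.2⟩ := by
        intro w hw
        induction hw with
        | refl => exact SimpleGraph.Reachable.refl _
        | @tail b c _ hbc ih =>
          refine ih.trans ?_
          obtain ⟨b, hb⟩ := b
          obtain ⟨c, hc⟩ := c
          obtain ⟨-, -, -, h | ⟨h, h'⟩ | ⟨h, h'⟩⟩ := hbc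
          · exact SimpleGraph.Adj.reachable h
          · simp only [Function.Embedding.subtype_apply] at h h'
            subst h
            have e1 : (G.induce (T i)).Adj ⟨b, hST i hb⟩ ⟨p, Or.inr ⟨rfl, hb⟩⟩ := hpa.symm
            have e2 : (G.induce (T i)).Adj ⟨p, Or.inr ⟨rfl, hb⟩⟩ ⟨c, hST i hc⟩ := h'
            exact e1.reachable.trans e2.reachable
          · simp only [Function.Embedding.subtype_apply] at h h'
            subst h
            have e1 : (G.induce (T i)).Adj ⟨b, hST i hb⟩ ⟨p, Or.inr ⟨rfl, hc⟩⟩ := h'.symm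
            have e2 : (G.induce (T i)).Adj ⟨p, Or.inr ⟨rfl, hc⟩⟩ ⟨c, hST i hc⟩ := hpa
            exact e1.reachable.trans e2.reachable
      exact this ⟨v, hv⟩ hr
    have reachp : ∀ w : T i, ∃ u, ∃ hu : u ∈ S i,
        (G.induce (T i)).Reachable w ⟨u, hST i hu⟩ := by
      rintro ⟨w, hw | ⟨rfl, hw⟩⟩
      · exact ⟨w, hw, SimpleGraph.Reachable.refl _⟩
      · refine ⟨a, hw, SimpleGraph.Adj.reachable ?_⟩
        exact hpa
    obtain ⟨⟨s, hs⟩⟩ := (h1 i).nonempty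
    have : Nonempty (T i) := ⟨⟨s, hST i hs⟩⟩
    refine SimpleGraph.Connected.mk fun w w' => ?_
    obtain ⟨u, hu, hwu⟩ := reachp w
    obtain ⟨u', hu', hwu'⟩ := reachp w'
    exact hwu.trans ((reach u u' hu hu').trans hwu'.symm)
  · have hd := Set.disjoint_left.1 (h2 i j hij)
    rw [Set.disjoint_left]
    rintro u (hu | ⟨rfl, hu⟩) (hv | ⟨hv', hv⟩)
    · exact hd hu hv
    · subst hv'; exact hp i hu
    · exact hp j hv
    · exact hd hu hv
  · obtain ⟨u, hu, v, hv, -, -, -, h | ⟨rfl, h⟩ | ⟨rfl, h⟩⟩ := h3 i j hij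
    · exact ⟨u, Or.inl hu, v, Or.inl hv, h⟩
    · exact ⟨p, Or.inr ⟨rfl, hu⟩, v, Or.inl hv, h⟩
    · exact ⟨u, Or.inl hu, p, Or.inr ⟨rfl, hv⟩, h.symm⟩

/-! ### A vertex with at most two neighbours -/

/-- The graph `G` with all edges at `p` deleted. -/
def isolate (G : SimpleGraph V) (p : V) : SimpleGraph V where
  Adj u v := G.Adj u v ∧ u ≠ p ∧ v ≠ p
  symm := ⟨fun _ _ h => ⟨h.1.symm, h.2.2, h.2.1⟩⟩
  loopless := ⟨fun _ h => h.1.ne rfl⟩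

theorem isolate_adj (G : SimpleGraph V) (p u v : V) :
    (isolate G p).Adj u v ↔ G.Adj u v ∧ u ≠ p ∧ v ≠ p := Iff.rfl

/-- `Big G v` says that `v` has at least three distinct neighbours, in the form: no two vertices
cover its neighbourhood. -/
def Big (G : SimpleGraph V) (v : V) : Prop := ∀ a b, ∃ c, G.Adj v c ∧ c ≠ a ∧ c ≠ b

/-- The edge `xy` is a root edge of `G`: all non-isolated vertices other than `x` and `y` have at
least three neighbours, and there is such a vertex. -/
def Rooted (G : SimpleGraph V) (x y : V) : Prop :=
  G.Adj x y ∧ (∃ v u, v ≠ x ∧ v ≠ y ∧ G.Adj v u) ∧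
    ∀ v u, v ≠ x → v ≠ y → G.Adj v u → Big G v

theorem ncard_support_lt [Finite V] {G H : SimpleGraph V} {p q : V} (hpq : G.Adj p q)
    (hp : ∀ u, ¬ H.Adj p u) (hH : ∀ u v, H.Adj u v → ∃ w, G.Adj u w) :
    H.support.ncard < G.support.ncard := by
  refine Set.ncard_lt_ncard ⟨?_, fun h => ?_⟩ (Set.toFinite _)
  · rintro u ⟨v, hv⟩
    exact hH u v hv
  · obtain ⟨w, hw⟩ := h (show p ∈ G.support from ⟨q, hpq⟩)
    exact hp w hw

theorem ncard_support_contractInto_lt [Finite V] {G : SimpleGraph V} {p a : V}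
    (hpa : G.Adj p a) : (contractInto G p a).support.ncard < G.support.ncard := by
  refine ncard_support_lt hpa (fun u h => h.2.1 rfl) ?_
  rintro u v ⟨-, -, -, h | ⟨rfl, h⟩ | ⟨rfl, h⟩⟩
  · exact ⟨v, h⟩
  · exact ⟨p, hpa.symm⟩
  · exact ⟨p, h.symm⟩

/-- If contracting `p` into `x` destroys rootedness, then some vertex `v` has dropped below three
neighbours; it must be a common neighbour of `x` and `p` with exactly three neighbours. -/
theorem exists_common_neighbour {G : SimpleGraph V} {x y p : V}
    (ih : ¬ Rooted (contractInto G p x) x y) (hR : Rooted G x y) (hp : p ≠ y)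
    (hxp : G.Adj x p) :
    ∃ v q, v ≠ x ∧ v ≠ y ∧ v ≠ p ∧ G.Adj v x ∧ G.Adj v p ∧ G.Adj v q ∧ q ≠ x ∧ q ≠ p ∧
      ∀ c, G.Adj v c → c = x ∨ c = p ∨ c = q := by
  obtain ⟨hxy, -, hB⟩ := hR
  have hBp : Big G p := hB p x hxp.ne' hp hxp.symm
  have : ∃ v u, v ≠ x ∧ v ≠ y ∧ (contractInto G p x).Adj v u ∧ ¬ Big (contractInto G p x) v := by
    by_contra hcon
    push Not at hcon
    refine ih ⟨?_, ?_, fun v u h1 h2 h3 => hcon v u h1 h2 h3⟩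
    · exact ⟨hxy.ne, hxp.ne, hp.symm, Or.inl hxy⟩
    · obtain ⟨c, hc, hcx, hcy⟩ := hBp x y
      exact ⟨c, x, hcx, hcy, hcx, hc.ne', hxp.ne, Or.inr (Or.inr ⟨rfl, hc⟩)⟩
  obtain ⟨v, u, hvx, hvy, hvu, hnb⟩ := this
  have hBv : Big G v := by
    obtain ⟨-, hvp, -, h | ⟨h, -⟩ | ⟨h, h'⟩⟩ := hvu
    · exact hB v u hvx hvy h
    · exact absurd h hvx
    · exact hB v p hvx hvy h'.symm
  have hvp : v ≠ p := hvu.2.1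
  unfold Big at hnb
  push Not at hnb
  obtain ⟨a, b, hab⟩ := hnb
  have hN : ∀ c, G.Adj v c → c ≠ p → c = a ∨ c = b := by
    intro c hc hcp
    by_contra hcon
    push Not at hcon
    exact hcon.2 (hab c ⟨hc.ne, hvp, hcp, Or.inl hc⟩ hcon.1)
  have hvpa : G.Adj v p := by
    obtain ⟨c, hc, hca, hcb⟩ := hBv a b
    by_contra hcon
    have : c ≠ p := by rintro rfl; exact hcon hc
    grind
  have hx : x = a ∨ x = b := by
    by_contra hcon
    push Not at hcon
    exact hcon.2 (hab x ⟨hvx, hvp, hxp.ne, Or.inr (Or.inr ⟨rfl, hvpa.symm⟩)⟩ hcon.1)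
  obtain ⟨q, hq⟩ : ∃ q, ∀ c, G.Adj v c → c = x ∨ c = p ∨ c = q := by
    rcases hx with rfl | rfl
    · exact ⟨b, fun c hc => by have := hN c hc; tauto⟩
    · exact ⟨a, fun c hc => by have := hN c hc; tauto⟩
  refine ⟨v, q, hvx, hvy, hvp, ?_, hvpa, ?_, ?_, ?_, hq⟩
  · obtain ⟨c, hc, h1, h2⟩ := hBv p q
    grind
  · obtain ⟨c, hc, h1, h2⟩ := hBv p x
    grind
  · obtain ⟨c, hc, h1, h2⟩ := hBv p x
    have := hBv p q
    grind
  · obtain ⟨c, hc, h1, h2⟩ := hBv p x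
    grind

/-- Inductive step when the root end `x` has a neighbour besides `y`.  Two uses of
`exists_common_neighbour` give adjacent neighbours `v₀`, `v₁` of `x`, each with exactly one further
neighbour, `q₀` and `q₁`.  In every case either there is a `K₄` or some proper minor is still
rooted at `xy`. -/
theorem hasCliqueMinor_of_rooted_aux [Finite V] {G : SimpleGraph V}
    (ih : ∀ H : SimpleGraph V, H.support.ncard < G.support.ncard →
      ∀ x y, Rooted H x y → HasCliqueMinor H 4)
    {x y p : V} (hR : Rooted G x y) (hp : p ≠ y) (hxp : G.Adj x p) : HasCliqueMinor G 4 := by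
  by_contra hno
  have ihc : ∀ {p a x y : V}, G.Adj p a → ¬ Rooted (contractInto G p a) x y := fun hpa h =>
    hno (HasCliqueMinor.of_contractInto hpa (ih _ (ncard_support_contractInto_lt hpa) _ _ h))
  obtain ⟨v₀, q, h0x, h0y, h0p, a0x, a0p, a0q, hqx, hqp, h0⟩ :=
    exists_common_neighbour (ihc hxp.symm) hR hp hxp
  obtain ⟨v₁, q₁, h1x, h1y, h10, a1x, a10, a1q, hq1x, hq10, h1⟩ :=
    exists_common_neighbour (ihc a0x) hR h0y a0x.symm
  obtain ⟨q₀, a0q0, hq0x, hq01, h0'⟩ : ∃ q₀, G.Adj v₀ q₀ ∧ q₀ ≠ x ∧ q₀ ≠ v₁ ∧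
      ∀ c, G.Adj v₀ c → c = x ∨ c = v₁ ∨ c = q₀ := by
    rcases h0 v₁ a10.symm with h | h | h
    · exact absurd h h1x
    · subst h; exact ⟨q, a0q, hqx, hqp, h0⟩
    · subst h; exact ⟨p, a0p, hxp.ne', hqp.symm, fun c hc => by have := h0 c hc; tauto⟩
  clear h0 a0q a0p hqx hqp q h0p hxp hp p
  obtain ⟨hxy, -, hB⟩ := hR
  have hq1v1 : q₁ ≠ v₁ := a1q.ne'
  have hq0v0 : q₀ ≠ v₀ := a0q0.ne'
  by_cases hqq : q₀ = q₁
  swap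
  · -- contracting the edge `v₀v₁` keeps all degrees
    refine ihc (x := x) (y := y) a10 ⟨?_, ⟨v₀, x, h0x, h0y, ?_⟩, ?_⟩
    · exact ⟨hxy.ne, h1x.symm, h1y.symm, Or.inl hxy⟩
    · exact ⟨h0x, h10.symm, h1x.symm, Or.inl a0x⟩
    · intro w u hwx hwy hwu a b
      simp only [contractInto_adj] at hwu ⊢
      by_cases hw0 : w = v₀
      · subst hw0
        have e1 : x ≠ q₀ := hq0x.symm
        have e2 : x ≠ q₁ := hq1x.symm
        by_cases hx : x ≠ a ∧ x ≠ b
        · exact ⟨x, by grind⟩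
        by_cases hx : q₀ ≠ a ∧ q₀ ≠ b
        · exact ⟨q₀, by grind⟩
        exact ⟨q₁, by grind⟩
      · have hBw : Big G w := by
          obtain ⟨-, -, -, h | ⟨h, -⟩ | ⟨-, h⟩⟩ := hwu
          · exact hB w u hwx hwy h
          · exact absurd h hw0
          · exact hB w v₁ hwx hwy h.symm
        by_cases hw1 : G.Adj w v₁
        · have hwq : w = q₁ := by
            rcases h1 w hw1.symm with h | h | h
            · exact absurd h hwx
            · exact absurd h hw0
            · exact h
          have hn : ¬ G.Adj w v₀ := fun h => by have := h0' w h.symm; grind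
          by_cases hv : v₀ ≠ a ∧ v₀ ≠ b
          · exact ⟨v₀, ⟨hw0, hwu.2.1, h10.symm, Or.inr (Or.inr ⟨rfl, hw1.symm⟩)⟩, hv⟩
          obtain ⟨c, hc, hca, hcb⟩ : ∃ c, G.Adj w c ∧ c ≠ v₁ ∧ (c = v₀ ∨ (c ≠ a ∧ c ≠ b)) := by
            rcases not_and_or.1 hv with h | h
            · obtain ⟨c, hc⟩ := hBw v₁ b
              exact ⟨c, by grind⟩
            · obtain ⟨c, hc⟩ := hBw v₁ a
              exact ⟨c, by grind⟩
          have hc0 : c ≠ v₀ := by rintro rfl; exact hn hc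
          exact ⟨c, ⟨hc.ne, hwu.2.1, hca, Or.inl hc⟩, by tauto⟩
        · obtain ⟨c, hc, hcab⟩ := hBw a b
          exact ⟨c, ⟨hc.ne, hwu.2.1, by rintro rfl; exact hw1 hc, Or.inl hc⟩, hcab⟩
  · subst hqq
    have hnq : ¬ G.Adj x q₀ := fun h =>
      hno (hasCliqueMinor_four a0x.symm a1x.symm h a10.symm a0q0 a1q)
    have hqy : q₀ ≠ y := by rintro rfl; exact hnq hxy
    have hBq : Big G q₀ := hB q₀ v₀ hq0x hqy a0q0.symm
    by_cases hdeg : ∀ a, ∃ c, G.Adj q₀ c ∧ c ≠ v₀ ∧ c ≠ v₁ ∧ c ≠ a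
    · -- `q₀` has degree at least four: delete `v₁` and contract `v₀` into `x`
      have hle : isolate G v₁ ≤ G := fun u v h => h.1
      have hadj : (isolate G v₁).Adj v₀ x := ⟨a0x, h10.symm, h1x.symm⟩
      refine hno ((HasCliqueMinor.of_contractInto hadj (ih _ ?_ x y ?_)).mono hle)
      · refine (ncard_support_contractInto_lt hadj).trans
          (ncard_support_lt a10 (fun u h => h.2.1 rfl) fun u v h => ⟨v, h.1⟩)
      · refine ⟨?_, ⟨q₀, x, hq0x, hqy, ?_⟩, ?_⟩
        · exact ⟨hxy.ne, h0x.symm, h0y.symm, Or.inl ⟨hxy, h1x.symm, h1y.symm⟩⟩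
        · exact ⟨hq0x, hq0v0, h0x.symm, Or.inr (Or.inr ⟨rfl, a0q0, h10.symm, hq01⟩)⟩
        · intro w u hwx hwy hwu a b
          simp only [contractInto_adj, isolate_adj] at hwu ⊢
          by_cases hwq : w = q₀
          · subst hwq
            by_cases hx : x ≠ a ∧ x ≠ b
            · exact ⟨x, by grind⟩
            obtain ⟨c, hc, h⟩ : ∃ c, (G.Adj w c ∧ c ≠ v₀ ∧ c ≠ v₁) ∧
                (c = x ∨ (c ≠ a ∧ c ≠ b)) := by
              rcases not_and_or.1 hx with h | h
              · obtain ⟨c, hc⟩ := hdeg b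
                exact ⟨c, by grind⟩
              · obtain ⟨c, hc⟩ := hdeg a
                exact ⟨c, by grind⟩
            have hcx : c ≠ x := by rintro rfl; exact hnq hc.1.symm
            exact ⟨c, ⟨hc.1.ne, hwu.2.1, hc.2.1, Or.inl ⟨hc.1, hq01, hc.2.2⟩⟩, by tauto⟩
          · have hw0 : w ≠ v₀ := hwu.2.1
            have hwG : G.Adj w u ∧ w ≠ v₁ := by
              obtain ⟨-, -, -, h | ⟨h, -⟩ | ⟨-, h⟩⟩ := hwu
              · exact ⟨h.1, h.2.1⟩
              · exact absurd h hwx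
              · have := h0' w h.1; grind
            obtain ⟨c, hc, hcab⟩ := hB w u hwx hwy hwG.1 a b
            have hc0 : c ≠ v₀ := by rintro rfl; have := h0' w hc.symm; grind
            have hc1 : c ≠ v₁ := by rintro rfl; have := h1 w hc.symm; grind
            exact ⟨c, ⟨hc.ne, hw0, hc0, Or.inl ⟨hc, hwG.2, hc1⟩⟩, hcab⟩
    · -- `q₀` has exactly one further neighbour `z`: contracting `q₀` into `z` keeps all degrees
      push Not at hdeg
      obtain ⟨z, hz⟩ := hdeg
      obtain ⟨c, hc, hc0, hc1⟩ := hBq v₀ v₁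
      obtain rfl : c = z := hz c hc hc0 hc1
      have hcx : c ≠ x := by rintro rfl; exact hnq hc.symm
      have h0c : ¬ G.Adj v₀ c := fun h => by
        have := h0' c h
        have := hc.ne
        grind
      have h1c : ¬ G.Adj v₁ c := fun h => by
        have := h1 c h
        have := hc.ne
        grind
      refine ihc (x := x) (y := y) hc ⟨?_, ⟨v₀, x, h0x, h0y, ?_⟩, ?_⟩
      · exact ⟨hxy.ne, hq0x.symm, hqy.symm, Or.inl hxy⟩
      · exact ⟨h0x, hq0v0.symm, hq0x.symm, Or.inl a0x⟩
      · intro w u hwx hwy hwu a b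
        have hwq : w ≠ q₀ := hwu.2.1
        have hBw : Big G w := by
          obtain ⟨-, -, -, h | ⟨h, -⟩ | ⟨-, h⟩⟩ := hwu
          · exact hB w u hwx hwy h
          · subst h; exact hB w q₀ hwx hwy hc.symm
          · exact hB w q₀ hwx hwy h.symm
        simp only [contractInto_adj]
        by_cases hwc : w = c
        · subst hwc
          by_cases hv : v₀ ≠ a ∧ v₀ ≠ b
          · exact ⟨v₀, ⟨hc0, hwq, hq0v0.symm, Or.inr (Or.inl ⟨rfl, a0q0.symm⟩)⟩, hv⟩
          by_cases hv' : v₁ ≠ a ∧ v₁ ≠ b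
          · exact ⟨v₁, ⟨hc1, hwq, hq01.symm, Or.inr (Or.inl ⟨rfl, a1q.symm⟩)⟩, hv'⟩
          obtain ⟨d, hd, hdq, -⟩ := hBw q₀ q₀
          refine ⟨d, ⟨hd.ne, hwq, hdq, Or.inl hd⟩, ?_⟩
          have : d ≠ v₀ := by rintro rfl; exact h0c hd.symm
          have : d ≠ v₁ := by rintro rfl; exact h1c hd.symm
          grind
        · by_cases hwadj : G.Adj w q₀
          · have hw01 : ¬ G.Adj w c := by
              by_cases e0 : w = v₀
              · subst e0; exact h0c
              by_cases e1 : w = v₁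
              · subst e1; exact h1c
              exact absurd (hz w hwadj.symm e0 e1) hwc
            by_cases hv : c ≠ a ∧ c ≠ b
            · exact ⟨c, ⟨hwc, hwq, hc.ne', Or.inr (Or.inr ⟨rfl, hwadj.symm⟩)⟩, hv⟩
            obtain ⟨d, hd, hdq, h⟩ : ∃ d, G.Adj w d ∧ d ≠ q₀ ∧ (d = c ∨ (d ≠ a ∧ d ≠ b)) := by
              rcases not_and_or.1 hv with h | h
              · obtain ⟨d, hd⟩ := hBw q₀ b
                exact ⟨d, by grind⟩
              · obtain ⟨d, hd⟩ := hBw q₀ a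
                exact ⟨d, by grind⟩
            have hdc : d ≠ c := by rintro rfl; exact hw01 hd
            exact ⟨d, ⟨hd.ne, hwq, hdq, Or.inl hd⟩, by tauto⟩
          · obtain ⟨d, hd, hdab⟩ := hBw a b
            exact ⟨d, ⟨hd.ne, hwq, by rintro rfl; exact hwadj hd, Or.inl hd⟩, hdab⟩

/-- By induction on the number of non-isolated vertices.  Keeping a root edge whose ends may have
small degree is what lets the induction survive contractions into `x`. -/
theorem hasCliqueMinor_of_rooted [Finite V] (n : ℕ) : ∀ (G : SimpleGraph V),
    G.support.ncard < n → ∀ x y, Rooted G x y → HasCliqueMinor G 4 := by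
  induction n with
  | zero => intro G hG; omega
  | succ n IH =>
    intro G hG x y hR
    have ih : ∀ H : SimpleGraph V, H.support.ncard < G.support.ncard →
        ∀ x y, Rooted H x y → HasCliqueMinor H 4 := fun H hH => IH H (by omega)
    by_cases hx : ∃ p, p ≠ y ∧ G.Adj x p
    · obtain ⟨p, hp, hxp⟩ := hx
      exact hasCliqueMinor_of_rooted_aux ih hR hp hxp
    by_cases hy : ∃ p, p ≠ x ∧ G.Adj y p
    · obtain ⟨p, hp, hyp⟩ := hy
      obtain ⟨hxy, ⟨v, u, h1, h2, h3⟩, h4⟩ := hR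
      exact hasCliqueMinor_of_rooted_aux ih
        ⟨hxy.symm, ⟨v, u, h2, h1, h3⟩, fun v u h h' => h4 v u h' h⟩ hp hyp
    -- otherwise `xy` is a component of `G`, and any other edge can serve as a root
    push Not at hx hy
    obtain ⟨hxy, ⟨v, u, hvx, hvy, hvu⟩, hB⟩ := hR
    have hnx : ∀ w, w ≠ y → ¬ G.Adj w x := fun w hw h => hx w hw h.symm
    have hny : ∀ w, w ≠ x → ¬ G.Adj w y := fun w hw h => hy w hw h.symm
    have hux : u ≠ x := by rintro rfl; exact hnx v hvy hvu
    have huy : u ≠ y := by rintro rfl; exact hny v hvx hvu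
    have hle : isolate G x ≤ G := fun u v h => h.1
    refine (ih (isolate G x) (ncard_support_lt hxy (fun u h => h.2.1 rfl) fun u v h => ⟨v, h.1⟩)
      v u ⟨⟨hvu, hvx, hux⟩, ?_, ?_⟩).mono hle
    · obtain ⟨c, hc, hcu, -⟩ := hB v u hvx hvy hvu u u
      exact ⟨c, v, hc.ne', hcu, hc.symm, by rintro rfl; exact hnx v hvy hc, hvx⟩
    · intro w t hwv hwu hwt a b
      have hwx := hwt.2.1
      have hwy : w ≠ y := by rintro rfl; exact hy t hwt.2.2 hwt.1
      obtain ⟨c, hc, hcab⟩ := hB w t hwx hwy hwt.1 a b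
      exact ⟨c, ⟨hc, hwx, by rintro rfl; exact hnx w hwy hc⟩, hcab⟩

/-- A `K₄`-minor-free graph with an edge has a vertex with one or two neighbours (`a = b` or a
non-neighbour `b` being allowed). -/
theorem exists_small [Finite V] {G : SimpleGraph V} (hG : ¬ HasCliqueMinor G 4) {x y : V}
    (hxy : G.Adj x y) : ∃ v a b, G.Adj v a ∧ ∀ c, G.Adj v c → c = a ∨ c = b := by
  by_contra hcon
  push Not at hcon
  have hB : ∀ v u, G.Adj v u → Big G v := by
    intro v u hvu a b
    by_contra h
    push Not at h
    by_cases ha : G.Adj v a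
    · obtain ⟨c, hc, h1, h2⟩ := hcon v a b ha
      exact h2 (h c hc h1)
    · have : ∀ c, G.Adj v c → c = b := fun c hc => h c hc (by rintro rfl; exact ha hc)
      obtain ⟨c, hc, h1, h2⟩ := hcon v u b hvu
      exact h2 (this c hc)
  obtain ⟨c, hc, hcy, -⟩ := hB x y hxy y y
  exact hG (hasCliqueMinor_of_rooted _ G (Nat.lt_succ_self _) x y
    ⟨hxy, ⟨c, x, hc.ne', hcy, hc.symm⟩, fun v u _ _ h => hB v u h⟩)

/-! ### Chordal completion and colouring -/

/-- A `K₄`-minor-free graph `G` lies in a graph `H` with a perfect elimination order `f` in which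
every vertex has at most two later neighbours, that is, `G` has treewidth at most two.  A vertex
with at most two neighbours is eliminated by contracting it into one of them, which joins the two.
-/
theorem exists_elimination [Finite V] (n : ℕ) : ∀ (G : SimpleGraph V), G.support.ncard < n →
    ¬ HasCliqueMinor G 4 → ∃ (H : SimpleGraph V) (f : V → ℕ), G ≤ H ∧ Function.Injective f ∧
      (∀ v, ∃ a b, ∀ c, H.Adj v c → f v < f c → c = a ∨ c = b) ∧
      ∀ v a b, H.Adj v a → H.Adj v b → f v < f a → f v < f b → a ≠ b → H.Adj a b := by
  classical
  induction n with
  | zero => intro G hG; omega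
  | succ n IH =>
    intro G hGn hG
    by_cases hE : ∃ x y, G.Adj x y
    swap
    · push Not at hE
      obtain ⟨m, ⟨e⟩⟩ := Finite.exists_equiv_fin V
      refine ⟨G, fun v => (e v : ℕ), le_rfl, fun u v h => e.injective (Fin.ext h), fun v => ?_,
        fun v a b h => absurd h (hE _ _)⟩
      exact ⟨v, v, fun c hc => absurd hc (hE _ _)⟩
    obtain ⟨x, y, hxy⟩ := hE
    obtain ⟨v, a, b, hva, hN⟩ := exists_small hG hxy
    have hlt := ncard_support_contractInto_lt hva
    obtain ⟨H, f, hle, hf, h2, h3⟩ := IH (contractInto G v a) (by omega)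
      (fun h => hG (h.of_contractInto hva))
    -- `v` is eliminated first, so it gets the least value
    let g : V → ℕ := fun u => if u = v then 0 else f u + 1
    have gv : g v = 0 := by simp [g]
    have gne : ∀ u, u ≠ v → g u = f u + 1 := fun u hu => by simp [g, hu]
    refine ⟨isolate H v ⊔ G, g, le_sup_right, ?_, ?_, ?_⟩
    · intro u w huw
      by_cases hu : u = v <;> by_cases hw : w = v
      · rw [hu, hw]
      · subst hu; rw [gv, gne w hw] at huw; omega
      · subst hw; rw [gv, gne u hu] at huw; omega
      · rw [gne u hu, gne w hw] at huw; exact hf (by omega)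
    · intro u
      by_cases hu : u = v
      · subst hu
        refine ⟨a, b, fun c hc _ => ?_⟩
        rcases hc with hc | hc
        · exact absurd rfl hc.2.1
        · exact hN c hc
      · obtain ⟨a', b', h⟩ := h2 u
        refine ⟨a', b', fun c hc hlt => ?_⟩
        have hcv : c ≠ v := by rintro rfl; rw [gv] at hlt; omega
        rw [gne u hu, gne c hcv] at hlt
        refine h c ?_ (by omega)
        rcases hc with hc | hc
        · exact hc.1
        · exact hle ⟨hc.ne, hu, hcv, Or.inl hc⟩
    · intro u c d huc hud hc hd hcd
      have hcv : c ≠ v := by rintro rfl; rw [gv] at hc; omega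
      have hdv : d ≠ v := by rintro rfl; rw [gv] at hd; omega
      refine Or.inl ⟨?_, hcv, hdv⟩
      by_cases hu : u = v
      · subst hu
        have hc' : G.Adj u c := huc.resolve_left fun h => h.2.1 rfl
        have hd' : G.Adj u d := hud.resolve_left fun h => h.2.1 rfl
        refine hle ⟨hcd, hcv, hdv, ?_⟩
        rcases hN c hc' with h | h
        · exact Or.inr (Or.inl ⟨h, hd'⟩)
        · rcases hN d hd' with h' | h'
          · exact Or.inr (Or.inr ⟨h', hc'⟩)
          · exact absurd (h.trans h'.symm) hcd
      · have key : ∀ w, w ≠ v → (isolate H v ⊔ G).Adj u w → H.Adj u w := by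
          rintro w hw (h | h)
          · exact h.1
          · exact hle ⟨h.ne, hu, hw, Or.inl h⟩
        rw [gne u hu, gne c hcv] at hc
        rw [gne u hu, gne d hdv] at hd
        exact h3 u c d (key c hcv huc) (key d hdv hud) (by omega) (by omega) hcd

/-- Greedy colouring in decreasing order of `r`. -/
theorem colorable_of_rank {E : Type} [Finite E] (K : SimpleGraph E) (r : E → ℕ) (k : ℕ)
    (h : ∀ e, {e' | K.Adj e e' ∧ r e ≤ r e'}.ncard < k) : K.Colorable k := by
  classical
  have := Fintype.ofFinite E
  rcases isEmpty_or_nonempty E with hE | ⟨⟨e₀⟩⟩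
  · exact SimpleGraph.Colorable.of_isEmpty k
  have hk : 0 < k := (Nat.zero_le _).trans_lt (h e₀)
  have key : ∀ n, ∀ A : Finset E, A.card = n →
      ∃ c : E → Fin k, ∀ u ∈ A, ∀ v ∈ A, K.Adj u v → c u ≠ c v := by
    intro n
    induction n with
    | zero =>
      intro A hA
      rw [Finset.card_eq_zero] at hA
      subst hA
      exact ⟨fun _ => ⟨0, hk⟩, by simp⟩
    | succ n ih =>
      intro A hA
      obtain ⟨e, heA, hmin⟩ := A.exists_min_image r (Finset.card_pos.1 (by omega))
      obtain ⟨c, hc⟩ := ih (A.erase e) (by rw [Finset.card_erase_of_mem heA]; omega)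
      obtain ⟨t, ht⟩ : ∃ t : Fin k, t ∉ c '' {e' | K.Adj e e' ∧ r e ≤ r e'} := by
        by_contra hcon
        push Not at hcon
        have h1 : (c '' {e' | K.Adj e e' ∧ r e ≤ r e'}) = Set.univ := Set.eq_univ_of_forall hcon
        have h2 := Set.ncard_image_le (f := c) (Set.toFinite {e' | K.Adj e e' ∧ r e ≤ r e'})
        rw [h1, Set.ncard_univ, Nat.card_fin] at h2
        exact absurd (h e) (by omega)
      have ht' : ∀ u ∈ A, K.Adj e u → c u ≠ t := fun u hu hadj hcu =>
        ht ⟨u, ⟨hadj, hmin u hu⟩, hcu⟩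
      refine ⟨Function.update c e t, fun u hu v hv huv => ?_⟩
      by_cases hue : u = e
      · subst hue
        rw [Function.update_self, Function.update_of_ne huv.ne']
        exact (ht' v hv huv).symm
      · by_cases hve : v = e
        · subst hve
          rw [Function.update_self, Function.update_of_ne hue]
          exact ht' u hu huv.symm
        · rw [Function.update_of_ne hue, Function.update_of_ne hve]
          exact hc u (Finset.mem_erase.2 ⟨hue, hu⟩) v (Finset.mem_erase.2 ⟨hve, hv⟩) huv
  obtain ⟨c, hc⟩ := key _ Finset.univ rfl
  exact ⟨SimpleGraph.Coloring.mk c fun {u v} huv =>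
    hc u (Finset.mem_univ _) v (Finset.mem_univ _) huv⟩

/-- In a chordal graph `H` with perfect elimination order `f`, an edge `xy` at distance at most one
from the edge `uv`, and whose later end comes no earlier than `v`, meets the closed later
neighbourhood of the later end `v` of `uv`. -/
theorem meets_bag {H : SimpleGraph V} {f : V → ℕ} (hf : Function.Injective f)
    (hcl : ∀ v a b, H.Adj v a → H.Adj v b → f v < f a → f v < f b → a ≠ b → H.Adj a b)
    {u v x y : V} (huv : H.Adj u v) (hxy : H.Adj x y) (hlt : f u < f v) (hlt' : f x < f y)
    (hvy : f v ≤ f y) {s t : V} (hs : s = u ∨ s = v) (ht : t = x ∨ t = y)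
    (hst : s = t ∨ H.Adj s t) :
    ∃ z, (z = x ∨ z = y) ∧ (z = v ∨ (H.Adj v z ∧ f v < f z)) := by
  by_cases hv : x = v ∨ y = v
  · rcases hv with h | h
    · exact ⟨x, Or.inl rfl, Or.inl h⟩
    · exact ⟨y, Or.inr rfl, Or.inl h⟩
  push Not at hv
  have hvy' : f v < f y := lt_of_le_of_ne hvy fun h => hv.2 (hf h).symm
  have byy : H.Adj v y → ∃ z, (z = x ∨ z = y) ∧ (z = v ∨ (H.Adj v z ∧ f v < f z)) :=
    fun h => ⟨y, Or.inr rfl, Or.inr ⟨h, hvy'⟩⟩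
  have nbr : ∀ t, (t = x ∨ t = y) → H.Adj v t →
      ∃ z, (z = x ∨ z = y) ∧ (z = v ∨ (H.Adj v z ∧ f v < f z)) := by
    rintro t (rfl | rfl) h
    · rcases lt_or_ge (f v) (f t) with h' | h'
      · exact ⟨t, Or.inl rfl, Or.inr ⟨h, h'⟩⟩
      · have : f t < f v := lt_of_le_of_ne h' fun e => hv.1 (hf e)
        exact byy (hcl t v y h.symm hxy this hlt' (Ne.symm hv.2))
    · exact byy h
  have uy : H.Adj u y → ∃ z, (z = x ∨ z = y) ∧ (z = v ∨ (H.Adj v z ∧ f v < f z)) :=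
    fun h => byy (hcl u v y huv h hlt (hlt.trans hvy') (Ne.symm hv.2))
  rcases hs with rfl | rfl
  · rcases hst with rfl | hst
    · rcases ht with rfl | rfl
      · exact uy hxy
      · omega
    · rcases ht with rfl | rfl
      · rcases lt_or_ge (f s) (f t) with h' | h'
        · exact nbr t (Or.inl rfl) (hcl s v t huv hst hlt h' (Ne.symm hv.1))
        · have : f t < f s := lt_of_le_of_ne h' fun e => hst.ne (hf e).symm
          exact uy (hcl t s y hst.symm hxy this hlt' (by rintro rfl; omega))
      · exact uy hst
  · rcases hst with rfl | hst
    · rcases ht with h | h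
      · exact absurd h.symm hv.1
      · exact absurd h.symm hv.2
    · exact nbr t ht hst

end

/-- Any `K₄`-minor-free multigraph of maximum degree `Δ` has strong chromatic index at
most `3Δ`, i.e. the square of its line graph is properly `3Δ`-colourable.  The multigraph
is given by a finite edge type `E` together with a loopless endpoint map `ends`. -/
theorem stmt_7 {V E : Type} [Fintype V] [Fintype E]
    (ends : E → Sym2 V) (hloop : ∀ e, ¬ (ends e).IsDiag)
    (hminor : ¬ HasCliqueMinor (SimpleGraph.fromEdgeSet (Set.range ends)) 4)
    (Δ : ℕ) (hΔ : ∀ v : V, {e : E | v ∈ ends e}.ncard ≤ Δ) :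
    (mLineSq ends).Colorable (3 * Δ) := by
  classical
  obtain ⟨H, f, hle, hf, hdeg, hcl⟩ := exists_elimination _ _ (Nat.lt_succ_self _) hminor
  have hadj : ∀ g x y, ends g = s(x, y) → H.Adj x y := by
    intro g x y hg
    refine hle ((SimpleGraph.fromEdgeSet_adj _).2 ⟨⟨g, hg⟩, ?_⟩)
    rintro rfl
    exact hloop g (hg ▸ Sym2.mk_isDiag_iff.2 rfl)
  -- `lo e` and `hi e` are the earlier and the later end of the edge `e`
  have horder : ∀ e, ∃ u v, ends e = s(u, v) ∧ f u < f v := by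
    intro e
    obtain ⟨u, v, huv⟩ : ∃ u v, ends e = s(u, v) := by
      induction h : ends e with | _ u v => exact ⟨u, v, rfl⟩
    rcases lt_trichotomy (f u) (f v) with h | h | h
    · exact ⟨u, v, huv, h⟩
    · exact absurd (hf h) (hadj e u v huv).ne
    · exact ⟨v, u, huv.trans Sym2.eq_swap, h⟩
  choose lo hi hends hlt using horder
  refine colorable_of_rank _ (fun e => f (hi e)) _ fun e => ?_
  obtain ⟨a, b, hab⟩ := hdeg (hi e)
  let B : V → Set E := fun z => {e' | z ∈ ends e'}
  have hcard : (B (hi e) ∪ B a ∪ B b).ncard ≤ 3 * Δ := by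
    have h1 := Set.ncard_union_le (B (hi e) ∪ B a) (B b)
    have h2 := Set.ncard_union_le (B (hi e)) (B a)
    have h3 : (B (hi e)).ncard ≤ Δ := hΔ _
    have h4 : (B a).ncard ≤ Δ := hΔ _
    have h5 : (B b).ncard ≤ Δ := hΔ _
    omega
  refine lt_of_lt_of_le (Set.ncard_lt_ncard ⟨?_, fun hsub => ?_⟩ (Set.toFinite _)) hcard
  · rintro e' ⟨hee', hr⟩
    obtain ⟨s, t, hs, ht, hst⟩ : ∃ s t, s ∈ ends e ∧ t ∈ ends e' ∧ (s = t ∨ H.Adj s t) := by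
      obtain ⟨-, (⟨x, h1, h2⟩ | ⟨x, y, h1, h2, g, hg⟩) | (⟨x, h1, h2⟩ | ⟨x, y, h1, h2, g, hg⟩)⟩ :=
        (SimpleGraph.fromRel_adj _ _ _).1 hee'
      · exact ⟨x, x, h1, h2, Or.inl rfl⟩
      · exact ⟨x, y, h1, h2, Or.inr (hadj g x y hg)⟩
      · exact ⟨x, x, h2, h1, Or.inl rfl⟩
      · exact ⟨y, x, h2, h1, Or.inr (hadj g x y hg).symm⟩
    rw [hends, Sym2.mem_iff] at hs ht
    obtain ⟨z, hz, hz'⟩ := meets_bag hf hcl (hadj e _ _ (hends e)) (hadj e' _ _ (hends e'))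
      (hlt e) (hlt e') hr hs ht hst
    have hze : z ∈ ends e' := by rw [hends, Sym2.mem_iff]; exact hz
    rcases hz' with rfl | ⟨h1, h2⟩
    · exact Or.inl (Or.inl hze)
    · rcases hab z h1 h2 with rfl | rfl
      · exact Or.inl (Or.inr hze)
      · exact Or.inr hze
  · -- the edge `e` itself meets the bag but is not adjacent to itself
    have : e ∈ B (hi e) ∪ B a ∪ B b := Or.inl (Or.inl (by
      change hi e ∈ ends e
      rw [hends]
      exact Sym2.mem_mk_right _ _))
    exact (hsub this).1.ne rfl
end

section
/- Let G be a K₄-minor-free multigraph and let A be a set of edges of G. Let Δ_A denote the maximum, over vertices v of G, of the number of edges of A incident to v. Then the subgraph of the square of the line graph of G induced by A has a proper vertex colouring with at most 3·Δ_A colours. -/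
/-! ### Contractions -/

/-- The graph obtained from `G` by contracting the edge `xv` onto `x` (if `x` and `v` are adjacent
at all) and deleting the vertices in `s`; it is meant to be used with `v ∈ s`. -/
def contractDelete {V : Type} (G : SimpleGraph V) (s : Set V) (v x : V) :
    SimpleGraph {w : V // w ∉ s} where
  Adj a b := a ≠ b ∧ (G.Adj a b ∨ (a.1 = x ∧ G.Adj x v ∧ G.Adj v b) ∨
    (b.1 = x ∧ G.Adj x v ∧ G.Adj v a))
  symm := ⟨by
    rintro a b ⟨hne, h⟩
    refine ⟨hne.symm, ?_⟩
    rcases h with h | h | h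
    · exact Or.inl h.symm
    · exact Or.inr (Or.inr h)
    · exact Or.inr (Or.inl h)⟩
  loopless := ⟨fun a h => h.1 rfl⟩

theorem HasCliqueMinor.of_contractDelete {V : Type} {G : SimpleGraph V} {s : Set V} {v x : V}
    (hv : v ∈ s) {k : ℕ} (h : HasCliqueMinor (contractDelete G s v x) k) : HasCliqueMinor G k := by
  obtain ⟨S, hconn, hdisj, hadj⟩ := h
  -- Each branch set is lifted as it stands, except that the one containing `x` also receives `v`.
  let S' : Fin k → Set V := fun i =>
    {y | (∃ h : y ∉ s, (⟨y, h⟩ : {w : V // w ∉ s}) ∈ S i) ∨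
      (y = v ∧ G.Adj x v ∧ ∃ h : x ∉ s, (⟨x, h⟩ : {w : V // w ∉ s}) ∈ S i)}
  have hin : ∀ i (y : {w : V // w ∉ s}), y ∈ S i → y.1 ∈ S' i := fun i y hy => Or.inl ⟨y.2, hy⟩
  have hinv : ∀ i (y : {w : V // w ∉ s}), y ∈ S i → y.1 = x → G.Adj x v → v ∈ S' i := by
    rintro i ⟨y, hy⟩ hyS rfl hxv
    exact Or.inr ⟨rfl, hxv, hy, hyS⟩
  refine ⟨S', ?_, ?_, ?_⟩
  · intro i
    have hstep : ∀ {p q : V} (hp : p ∈ S' i) (hq : q ∈ S' i), G.Adj p q →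
        (G.induce (S' i)).Reachable ⟨p, hp⟩ ⟨q, hq⟩ := fun hp hq hpq =>
      SimpleGraph.Adj.reachable (by simpa using hpq)
    have hreach : ∀ a b : S i, (G.induce (S' i)).Reachable ⟨a.1.1, hin i a.1 a.2⟩
        ⟨b.1.1, hin i b.1 b.2⟩ := by
      intro a b
      obtain ⟨p⟩ := (hconn i).preconnected a b
      induction p with
      | nil => exact SimpleGraph.Reachable.refl _
      | @cons a c b hac _ ih =>
        refine SimpleGraph.Reachable.trans ?_ ih
        have hac' : (contractDelete G s v x).Adj a.1 c.1 := by simpa using hac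
        rcases hac'.2 with h | ⟨h1, h2, h3⟩ | ⟨h1, h2, h3⟩
        · exact hstep _ _ h
        · have hvS := hinv i a.1 a.2 h1 h2
          exact (hstep (hin i a.1 a.2) hvS (h1 ▸ h2)).trans (hstep _ _ h3)
        · have hvS := hinv i c.1 c.2 h1 h2
          exact (hstep (hin i a.1 a.2) hvS h3.symm).trans (hstep _ _ (h1 ▸ h2.symm))
    have hto : ∀ y : S' i, ∃ a : S i,
        (G.induce (S' i)).Reachable y ⟨a.1.1, hin i a.1 a.2⟩ := by
      rintro ⟨y, hy⟩
      rcases hy with ⟨h1, h2⟩ | ⟨rfl, h2, h3, h4⟩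
      · exact ⟨⟨⟨y, h1⟩, h2⟩, SimpleGraph.Reachable.refl _⟩
      · exact ⟨⟨⟨x, h3⟩, h4⟩, hstep _ _ h2.symm⟩
    obtain ⟨a₀⟩ := (hconn i).nonempty
    have : Nonempty (S' i) := ⟨⟨a₀.1.1, hin i a₀.1 a₀.2⟩⟩
    refine SimpleGraph.Connected.mk ?_
    intro y z
    obtain ⟨a, ha⟩ := hto y
    obtain ⟨b, hb⟩ := hto z
    exact ha.trans ((hreach a b).trans hb.symm)
  · intro i j hij
    rw [Set.disjoint_left]
    have hd : ∀ y, y ∈ S i → y ∉ S j := fun _ hy =>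
      Set.disjoint_left.1 (hdisj i j hij) hy
    rintro y (⟨h1, h2⟩ | ⟨rfl, h2, h3, h4⟩) (⟨h5, h6⟩ | ⟨h5, h6, h7, h8⟩)
    · exact hd _ h2 h6
    · exact h1 (h5 ▸ hv)
    · exact h5 hv
    · exact hd _ h4 h8
  · intro i j hij
    obtain ⟨a, ha, b, hb, -, h | ⟨h1, h2, h3⟩ | ⟨h1, h2, h3⟩⟩ := hadj i j hij
    · exact ⟨a.1, hin i a ha, b.1, hin j b hb, h⟩
    · exact ⟨v, hinv i a ha h1 h2, b.1, hin j b hb, h3⟩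
    · exact ⟨a.1, hin i a ha, v, hinv j b hb h1 h2, h3.symm⟩

theorem hasCliqueMinor_of_clique {V : Type} {G : SimpleGraph V} {a b c d : V}
    (hab : G.Adj a b) (hac : G.Adj a c) (had : G.Adj a d) (hbc : G.Adj b c) (hbd : G.Adj b d)
    (hcd : G.Adj c d) : HasCliqueMinor G 4 := by
  have key : ∀ i j : Fin 4, i ≠ j → G.Adj (![a, b, c, d] i) (![a, b, c, d] j) := by
    intro i j hij
    fin_cases i <;> fin_cases j <;> simp_all [SimpleGraph.adj_comm]
  refine ⟨fun i => {![a, b, c, d] i}, ?_, ?_, ?_⟩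
  · intro i
    have : Nonempty ({![a, b, c, d] i} : Set V) := ⟨⟨_, rfl⟩⟩
    refine SimpleGraph.Connected.mk ?_
    rintro ⟨y, rfl⟩ ⟨z, rfl⟩
    exact SimpleGraph.Reachable.refl _
  · intro i j hij
    simpa using (key i j hij).ne
  · intro i j hij
    exact ⟨_, rfl, _, rfl, key i j hij⟩

/-! ### Minimum degree three forces a `K₄` minor -/

/-- The vertex `w` has at least three neighbours in `G`. -/
def HasThreeNeighbors {V : Type} (G : SimpleGraph V) (w : V) : Prop :=
  ∃ p q r, G.Adj w p ∧ G.Adj w q ∧ G.Adj w r ∧ p ≠ q ∧ p ≠ r ∧ q ≠ r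

set_option maxHeartbeats 400000 in
/-- The induction step of `hasCliqueMinor_of_three_neighbors`. In a smallest counterexample, every
contraction of an edge, possibly followed by deletions, leaves a vertex with at most two
neighbours; `hstep` spells this out on the vertices of `G`. It follows that every edge lies in a
triangle and that some vertex `z` has degree three. As there is no `K₄`, two neighbours `a`, `c`
of `z` are nonadjacent, and the third one, `b`, has degree three as well. Then the diamond
`a, b, c, z` can be replaced by the edge `ac` without creating a vertex of degree less than
three, a contradiction. -/
theorem false_of_contractions {V : Type} (G : SimpleGraph V) [Nonempty V]
    (hdeg : ∀ w, HasThreeNeighbors G w)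
    (hK : ∀ a b c d, G.Adj a b → G.Adj a c → G.Adj a d → G.Adj b c → G.Adj b d → ¬ G.Adj c d)
    (hstep : ∀ (s : Set V) (v x : V), v ∈ s → x ∉ s → G.Adj x v → ∃ w, w ∉ s ∧
      ∀ p q r, p ∉ s → q ∉ s → r ∉ s → p ≠ w → q ≠ w → r ≠ w → p ≠ q → p ≠ r → q ≠ r →
        (G.Adj w p ∨ (w = x ∧ G.Adj v p) ∨ (p = x ∧ G.Adj v w)) →
        (G.Adj w q ∨ (w = x ∧ G.Adj v q) ∨ (q = x ∧ G.Adj v w)) →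
        (G.Adj w r ∨ (w = x ∧ G.Adj v r) ∨ (r = x ∧ G.Adj v w)) → False) : False := by
  have hsymm : ∀ a b, G.Adj a b → G.Adj b a := fun a b h => h.symm
  have hirr : ∀ a b, G.Adj a b → a ≠ b := fun a b h => h.ne
  -- Contracting an edge in no triangle lowers no degree below three.
  have htri : ∀ x v, G.Adj x v → ∃ t, G.Adj x t ∧ G.Adj v t := by
    intro x v hxv
    by_contra! hno
    obtain ⟨w, hw, hwn⟩ := hstep {v} v x rfl (by simpa using hxv.ne) hxv
    simp only [Set.mem_singleton_iff] at hw hwn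
    obtain ⟨p, q, r, hp, hq, hr, hpq, hpr, hqr⟩ := hdeg w
    by_cases hwx : w = x
    · subst hwx
      have h2 : ∃ p q, G.Adj w p ∧ G.Adj w q ∧ p ≠ q ∧ p ≠ v ∧ q ≠ v := by grind
      obtain ⟨p, q, hp, hq, hpq, hpv, hqv⟩ := h2
      have h1 : ∃ t, G.Adj v t ∧ t ≠ w := by
        obtain ⟨p, q, r, hp, hq, hr, hpq, hpr, hqr⟩ := hdeg v
        grind
      obtain ⟨t, ht, htw⟩ := h1
      exact hwn p q t hpv hqv (hirr _ _ ht).symm (hirr _ _ hp).symm (hirr _ _ hq).symm htw hpq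
        (by grind) (by grind) (Or.inl hp) (Or.inl hq) (Or.inr (Or.inl ⟨rfl, ht⟩))
    · by_cases h1 : p = v
      · refine hwn x q r ?_ ?_ ?_ ?_ ?_ ?_ ?_ ?_ ?_ ?_ ?_ ?_ <;> clear hwn hstep <;> grind
      by_cases h2 : q = v
      · refine hwn x p r ?_ ?_ ?_ ?_ ?_ ?_ ?_ ?_ ?_ ?_ ?_ ?_ <;> clear hwn hstep <;> grind
      by_cases h3 : r = v
      · refine hwn x p q ?_ ?_ ?_ ?_ ?_ ?_ ?_ ?_ ?_ ?_ ?_ ?_ <;> clear hwn hstep <;> grind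
      refine hwn p q r ?_ ?_ ?_ ?_ ?_ ?_ ?_ ?_ ?_ ?_ ?_ ?_ <;> clear hwn hstep <;> grind
  -- A vertex `w ≠ v` of degree at least four keeps three neighbours when `v` is contracted.
  have hcubic : ∃ z a b c, G.Adj z a ∧ G.Adj z b ∧ G.Adj z c ∧ a ≠ b ∧ a ≠ c ∧ b ≠ c ∧
      ∀ t, G.Adj z t → t = a ∨ t = b ∨ t = c := by
    by_contra! hno
    obtain ⟨v⟩ := ‹Nonempty V›
    obtain ⟨x, -, -, hx, -⟩ := hdeg v
    obtain ⟨w, hw, hwn⟩ := hstep {v} v x rfl (by simpa using hx.ne') hx.symm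
    simp only [Set.mem_singleton_iff] at hw hwn
    have h3 : ∃ p q r, G.Adj w p ∧ G.Adj w q ∧ G.Adj w r ∧ p ≠ q ∧ p ≠ r ∧ q ≠ r ∧
        p ≠ v ∧ q ≠ v ∧ r ≠ v := by
      obtain ⟨p, q, r, hp, hq, hr, hpq, hpr, hqr⟩ := hdeg w
      obtain ⟨t, ht⟩ := hno w p q r hp hq hr hpq hpr hqr
      by_cases h1 : p = v
      · exact ⟨t, q, r, by grind⟩
      by_cases h2 : q = v
      · exact ⟨t, p, r, by grind⟩
      by_cases h3 : r = v
      · exact ⟨t, p, q, by grind⟩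
      exact ⟨p, q, r, by grind⟩
    obtain ⟨p, q, r, hp, hq, hr, hpq, hpr, hqr, hpv, hqv, hrv⟩ := h3
    exact hwn p q r hpv hqv hrv hp.ne' hq.ne' hr.ne' hpq hpr hqr (Or.inl hp) (Or.inl hq)
      (Or.inl hr)
  obtain ⟨z, a, b, c, hza, hzb, hzc, hba, hbc, hac, hab, hacne, hbcne, hz⟩ :
      ∃ z a b c, G.Adj z a ∧ G.Adj z b ∧ G.Adj z c ∧ G.Adj b a ∧ G.Adj b c ∧ ¬ G.Adj a c ∧
        a ≠ b ∧ a ≠ c ∧ b ≠ c ∧ ∀ t, G.Adj z t → t = a ∨ t = b ∨ t = c := by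
    obtain ⟨z, a, b, c, hza, hzb, hzc, hab, hac, hbc, hz⟩ := hcubic
    obtain ⟨ta, hta, hta'⟩ := htri z a hza
    obtain ⟨tb, htb, htb'⟩ := htri z b hzb
    obtain ⟨tc, htc, htc'⟩ := htri z c hzc
    have hk := hK z a b c hza hzb hzc
    clear hstep hK htri hdeg
    by_cases h1 : G.Adj a b
    · by_cases h2 : G.Adj a c
      · exact ⟨z, b, a, c, by grind⟩
      · exact ⟨z, a, b, c, by grind⟩
    · exact ⟨z, a, c, b, by grind⟩
  clear hK hcubic
  have hz' : ∀ t, G.Adj t z → t = a ∨ t = b ∨ t = c := fun t h => hz t h.symm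
  -- Contracting `z` onto `a` creates the edge `ac` and only lowers the degree of `b`, so `b` has
  -- degree three.
  have hb : ∀ t, G.Adj b t → t = z ∨ t = a ∨ t = c := by
    by_contra! hno
    obtain ⟨t, hbt, htz, hta, htc⟩ := hno
    obtain ⟨w, hw, hwn⟩ := hstep {z} z a rfl (by simpa using hza.ne') hza.symm
    simp only [Set.mem_singleton_iff] at hw hwn
    by_cases hwb : w = b
    · subst hwb
      refine hwn t a c ?_ ?_ ?_ ?_ ?_ ?_ ?_ ?_ ?_ ?_ ?_ ?_ <;>
        clear hwn hstep hdeg htri <;> grind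
    obtain ⟨p, q, r, hp, hq, hr, hpq, hpr, hqr⟩ := hdeg w
    -- The lost neighbour `z` of `w` is made up for by `c` if `w = a`, and by `a` if `w = c`.
    by_cases hwa : w = a
    · subst hwa
      have h2 : ∃ p q, G.Adj w p ∧ G.Adj w q ∧ p ≠ q ∧ p ≠ z ∧ q ≠ z := by grind
      obtain ⟨p, q, hp, hq, hpq, hpz, hqz⟩ := h2
      refine hwn p q c ?_ ?_ ?_ ?_ ?_ ?_ ?_ ?_ ?_ ?_ ?_ ?_ <;>
        clear hwn hstep hdeg htri <;> grind
    by_cases hwc : w = c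
    · subst hwc
      have h2 : ∃ p q, G.Adj w p ∧ G.Adj w q ∧ p ≠ q ∧ p ≠ z ∧ q ≠ z := by grind
      obtain ⟨p, q, hp, hq, hpq, hpz, hqz⟩ := h2
      refine hwn p q a ?_ ?_ ?_ ?_ ?_ ?_ ?_ ?_ ?_ ?_ ?_ ?_ <;>
        clear hwn hstep hdeg htri <;> grind
    refine hwn p q r ?_ ?_ ?_ ?_ ?_ ?_ ?_ ?_ ?_ ?_ ?_ ?_ <;>
      clear hwn hstep hdeg htri <;> grind
  have hb' : ∀ t, G.Adj t b → t = z ∨ t = a ∨ t = c := fun t h => hb t h.symm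
  -- A neighbour `p` of `y` outside the diamond lies with `y` in a triangle, whose third vertex is
  -- also outside the diamond, since `z` and `b` have no neighbours there.
  have hfour : ∀ y, y = a ∨ y = c →
      ∃ p q, G.Adj y p ∧ G.Adj y q ∧ p ≠ q ∧ p ≠ z ∧ p ≠ b ∧ q ≠ z ∧ q ≠ b := by
    intro y hy
    obtain ⟨p, hp, hpz, hpb⟩ : ∃ p, G.Adj y p ∧ p ≠ z ∧ p ≠ b := by
      obtain ⟨p, q, r, hp, hq, hr, hpq, hpr, hqr⟩ := hdeg y
      grind
    obtain ⟨q, hq, hq'⟩ := htri y p hp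
    exact ⟨p, q, by grind⟩
  obtain ⟨p₁, q₁, hpq₁⟩ := hfour a (Or.inl rfl)
  obtain ⟨p₂, q₂, hpq₂⟩ := hfour c (Or.inr rfl)
  -- Hence replacing the diamond on `a, b, c, z` by the edge `ac` keeps minimum degree three.
  obtain ⟨w, hw, hwn⟩ := hstep {z, b} z a (by simp) (by simp; grind) hza.symm
  simp only [Set.mem_singleton_iff, Set.mem_insert_iff, not_or] at hw hwn
  by_cases hwa : w = a
  · subst hwa
    refine hwn p₁ q₁ c ?_ ?_ ?_ ?_ ?_ ?_ ?_ ?_ ?_ ?_ ?_ ?_ <;>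
      clear hwn hstep hdeg htri <;> grind
  by_cases hwc : w = c
  · subst hwc
    refine hwn p₂ q₂ a ?_ ?_ ?_ ?_ ?_ ?_ ?_ ?_ ?_ ?_ ?_ ?_ <;>
      clear hwn hstep hdeg htri <;> grind
  obtain ⟨p, q, r, hp, hq, hr, hpq, hpr, hqr⟩ := hdeg w
  refine hwn p q r ?_ ?_ ?_ ?_ ?_ ?_ ?_ ?_ ?_ ?_ ?_ ?_ <;>
    clear hwn hstep hdeg htri <;> grind

theorem hasCliqueMinor_of_three_neighbors (n : ℕ) : ∀ (V : Type) [Finite V] [Nonempty V]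
    (G : SimpleGraph V), Nat.card V = n → (∀ w, HasThreeNeighbors G w) → HasCliqueMinor G 4 := by
  induction n using Nat.strong_induction_on with
  | _ n ih =>
    intro V _ _ G hcard hdeg
    by_contra hG
    refine false_of_contractions G hdeg
      (fun a b c d h1 h2 h3 h4 h5 h6 => hG (hasCliqueMinor_of_clique h1 h2 h3 h4 h5 h6)) ?_
    intro s v x hv hx hxv
    by_contra! hno
    have hlt : Nat.card {w : V // w ∉ s} < n := by
      rw [← hcard]
      exact Finite.card_subtype_lt (x := v) (by simpa using hv)
    have : Nonempty {w : V // w ∉ s} := ⟨⟨x, hx⟩⟩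
    refine hG (HasCliqueMinor.of_contractDelete (x := x) hv (ih _ hlt _ _ rfl ?_))
    rintro ⟨w, hw⟩
    obtain ⟨p, q, r, hp, hq, hr, hpw, hqw, hrw, hpq, hpr, hqr, h1, h2, h3, -⟩ := hno w hw
    refine ⟨⟨p, hp⟩, ⟨q, hq⟩, ⟨r, hr⟩, ⟨by simpa using hpw.symm, ?_⟩, ⟨by simpa using hqw.symm, ?_⟩,
      ⟨by simpa using hrw.symm, ?_⟩, by simpa using hpq, by simpa using hpr, by simpa using hqr⟩
    · simpa [hxv] using h1
    · simpa [hxv] using h2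
    · simpa [hxv] using h3

/-! ### Elimination orderings -/

/-- The injective ranking `r` of the vertices of `T` is a perfect elimination ordering of width at
most two: every vertex has at most two neighbours of higher rank, and these are adjacent. The
vertices `x`, `y` in `width` need not be distinct from each other or from `u`. -/
structure IsElimOrdering {V : Type} (T : SimpleGraph V) (r : V → ℕ) : Prop where
  inj : Function.Injective r
  width : ∀ u, ∃ x y, ∀ w, T.Adj u w → r u < r w → w = x ∨ w = y
  clique : ∀ u a b, T.Adj u a → T.Adj u b → r u < r a → r u < r b → a ≠ b → T.Adj a b

theorem exists_elimination_ordering (n : ℕ) : ∀ (V : Type) [Finite V] (G : SimpleGraph V),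
    Nat.card V = n → ¬ HasCliqueMinor G 4 →
    ∃ (T : SimpleGraph V) (r : V → ℕ), G ≤ T ∧ IsElimOrdering T r := by
  induction n with
  | zero =>
    intro V _ G hcard _
    have hV : IsEmpty V := by
      rcases Nat.card_eq_zero.1 hcard with h | h
      · exact h
      · exact absurd ‹Finite V› (not_finite_iff_infinite.2 h)
    exact ⟨G, fun _ => 0, le_rfl, fun a => hV.elim a, fun a => hV.elim a, fun a => hV.elim a⟩
  | succ n ih =>
    intro V _ G hcard hG
    have : Nonempty V := (Nat.card_pos_iff.1 (by omega)).1
    obtain ⟨v, hv⟩ : ∃ v, ¬ HasThreeNeighbors G v := by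
      by_contra! h
      exact hG (hasCliqueMinor_of_three_neighbors _ V G hcard h)
    -- If `v` is isolated, `p = q = v` serves, and the contraction below merely deletes `v`.
    obtain ⟨p, q, hpq, hp⟩ : ∃ p q, (∀ w, G.Adj v w → w = p ∨ w = q) ∧
        (∀ w, G.Adj v w → G.Adj v p) := by
      unfold HasThreeNeighbors at hv
      by_cases h1 : ∃ p, G.Adj v p
      · obtain ⟨p, hp⟩ := h1
        by_cases h2 : ∃ q, G.Adj v q ∧ q ≠ p
        · obtain ⟨q, hq, hqp⟩ := h2
          refine ⟨p, q, fun w hw => ?_, fun _ _ => hp⟩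
          by_contra! hne
          exact hv ⟨p, q, w, hp, hq, hw, hqp.symm, hne.1.symm, hne.2.symm⟩
        · push Not at h2
          exact ⟨p, p, fun w hw => Or.inl (h2 w hw), fun _ _ => hp⟩
      · push Not at h1
        exact ⟨v, v, fun w hw => absurd hw (h1 w), fun w hw => absurd hw (h1 w)⟩
    classical
    have hcard' : Nat.card {w : V // w ∉ ({v} : Set V)} = n := by
      have h := Nat.card_congr (Equiv.sumCompl (fun w => w ∈ ({v} : Set V)))
      rw [Nat.card_sum, hcard] at h
      have h1 : Nat.card {w : V // w ∈ ({v} : Set V)} = 1 := by simp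
      omega
    obtain ⟨T, r, hle, hT⟩ := ih _ (contractDelete G {v} v p) hcard'
      (fun h => hG (h.of_contractDelete (Set.mem_singleton v)))
    -- `v` is put back as the first vertex, with its old neighbours.
    let T' : SimpleGraph V :=
      { Adj := fun a b => (∃ (ha : a ∉ ({v} : Set V)) (hb : b ∉ ({v} : Set V)),
            T.Adj ⟨a, ha⟩ ⟨b, hb⟩) ∨ ((a = v ∨ b = v) ∧ G.Adj a b)
        symm := ⟨by
          rintro a b (⟨ha, hb, h⟩ | ⟨h, h'⟩)
          · exact Or.inl ⟨hb, ha, h.symm⟩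
          · exact Or.inr ⟨h.symm, h'.symm⟩⟩
        loopless := ⟨by
          rintro a (⟨ha, hb, h⟩ | ⟨h, h'⟩)
          · exact h.ne rfl
          · exact h'.ne rfl⟩ }
    let r' : V → ℕ := fun a => if ha : a ∉ ({v} : Set V) then r ⟨a, ha⟩ + 1 else 0
    have hr'v : r' v = 0 := by simp [r']
    have hr' : ∀ a (ha : a ∉ ({v} : Set V)), r' a = r ⟨a, ha⟩ + 1 := by
      intro a ha
      simp only [r', dif_pos ha]
    have hmem : ∀ a, a ≠ v → a ∉ ({v} : Set V) := fun a ha => by simpa using ha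
    have hTv : ∀ b, T'.Adj v b → G.Adj v b := by
      rintro b (⟨ha, -, -⟩ | ⟨-, h⟩)
      · exact absurd rfl ha
      · exact h
    have hT' : ∀ a b, T'.Adj a b → r' a < r' b → (a = v ∧ G.Adj v b) ∨
        ∃ (ha : a ∉ ({v} : Set V)) (hb : b ∉ ({v} : Set V)), T.Adj ⟨a, ha⟩ ⟨b, hb⟩ ∧
          r ⟨a, ha⟩ < r ⟨b, hb⟩ := by
      rintro a b (⟨ha, hb, h⟩ | ⟨rfl | rfl, h⟩) hlt
      · refine Or.inr ⟨ha, hb, h, ?_⟩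
        rw [hr' a ha, hr' b hb] at hlt
        omega
      · exact Or.inl ⟨rfl, h⟩
      · omega
    refine ⟨T', r', ?_, ?_, ?_, ?_⟩
    · intro a b hab
      by_cases ha : a = v
      · exact Or.inr ⟨Or.inl ha, hab⟩
      by_cases hb : b = v
      · exact Or.inr ⟨Or.inr hb, hab⟩
      exact Or.inl ⟨hmem a ha, hmem b hb, hle ⟨by simpa using hab.ne, Or.inl hab⟩⟩
    · intro a b hab
      by_cases ha : a = v
      · by_cases hb : b = v
        · rw [ha, hb]
        · rw [ha, hr'v, hr' b (hmem b hb)] at hab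
          omega
      · by_cases hb : b = v
        · rw [hb, hr'v, hr' a (hmem a ha)] at hab
          omega
        · rw [hr' a (hmem a ha), hr' b (hmem b hb)] at hab
          exact congrArg Subtype.val (hT.inj (Nat.succ_injective hab))
    · intro u
      by_cases hu : u = v
      · subst hu
        exact ⟨p, q, fun w hw _ => hpq w (hTv w hw)⟩
      · obtain ⟨x, y, hxy⟩ := hT.width ⟨u, hmem u hu⟩
        refine ⟨x.1, y.1, fun w hw hlt => ?_⟩
        rcases hT' u w hw hlt with ⟨h, -⟩ | ⟨h1, h2, h3, h4⟩
        · exact absurd h hu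
        · rcases hxy _ h3 h4 with h | h
          · exact Or.inl (congrArg Subtype.val h)
          · exact Or.inr (congrArg Subtype.val h)
    · intro u a b hua hub hra hrb hab
      rcases hT' u a hua hra with ⟨rfl, ha⟩ | ⟨h1, h2, h3, h4⟩
      · have hb := hTv b hub
        have hpv : G.Adj p u := (hp a ha).symm
        refine Or.inl ⟨hmem a ha.ne', hmem b hb.ne', hle ⟨by simpa using hab, ?_⟩⟩
        -- One of the two neighbours is `p`, so contracting `v` onto `p` joins them.
        rcases hpq a ha with rfl | rfl
        · exact Or.inr (Or.inl ⟨rfl, hpv, hb⟩)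
        · rcases hpq b hb with rfl | rfl
          · exact Or.inr (Or.inr ⟨rfl, hpv, ha⟩)
          · exact absurd rfl hab
      · rcases hT' u b hub hrb with ⟨rfl, -⟩ | ⟨_, h6, h7, h8⟩
        · exact absurd rfl h1
        · exact Or.inl ⟨h2, h6, hT.clique _ _ _ h3 h7 h4 h8 (by simpa using hab)⟩

/-! ### An edge of low degree -/

/-- Here `ab` plays the role of an edge of `A`: by the choice of `u`, its later endpoint `b` does
not precede `u`. If `ab` meets the closed neighbourhood of `{u, v}`, then it meets
`u` or a later neighbour of `u`. -/
theorem touches_of_close {V : Type} {T : SimpleGraph V} {r : V → ℕ} (hT : IsElimOrdering T r)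
    {u v a b c d : V} (huv : T.Adj v u) (hvu : r v < r u) (hab : T.Adj a b) (hrab : r a < r b)
    (hub : r u ≤ r b) (hc : c = u ∨ c = v) (hd : d = a ∨ d = b) (hcd : c = d ∨ T.Adj c d) :
    ∃ w, (w = a ∨ w = b) ∧ (w = u ∨ (T.Adj u w ∧ r u < r w)) := by
  have hinj : ∀ a b, r a = r b → a = b := fun a b h => hT.inj h
  have hcl := hT.clique
  have hsymm : ∀ a b, T.Adj a b → T.Adj b a := fun a b h => h.symm
  have hlater : ∀ w, r u < r w → (T.Adj u w ∨ T.Adj v w) → T.Adj u w := by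
    rintro w hw (h | h)
    · exact h
    · exact hcl v u w huv h hvu (hvu.trans hw) (by rintro rfl; omega)
  by_cases hbu : b = u
  · exact ⟨b, Or.inr rfl, Or.inl hbu⟩
  by_cases hau : a = u
  · exact ⟨a, Or.inl rfl, Or.inl hau⟩
  have hub' : r u < r b := lt_of_le_of_ne hub (fun h => hbu (hinj _ _ h).symm)
  have hnear : ∀ w, r u < r w → w = d → T.Adj u w := by
    rintro w hw rfl
    refine hlater w hw ?_
    rcases hc with rfl | rfl
    · rcases hcd with rfl | h
      · omega
      · exact Or.inl h
    · rcases hcd with rfl | h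
      · omega
      · exact Or.inr h
  rcases hd with rfl | rfl
  · by_cases hud : r u < r d
    · exact ⟨d, Or.inl rfl, Or.inr ⟨hnear d hud rfl, hud⟩⟩
    have hdu : r d < r u := lt_of_le_of_ne (not_lt.1 hud) (fun h => hau (hinj _ _ h))
    refine ⟨b, Or.inr rfl, Or.inr ⟨?_, hub'⟩⟩
    have hfromu : T.Adj d u → T.Adj u b := fun h => hcl d u b h hab hdu hrab (Ne.symm hbu)
    rcases hc with rfl | rfl
    · rcases hcd with rfl | h
      · exact hab
      · exact hfromu h.symm
    · rcases hcd with rfl | h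
      · exact hfromu huv
      · rcases lt_trichotomy (r c) (r d) with h1 | h1 | h1
        · exact hfromu (hcl c d u h huv h1 hvu hau)
        · exact absurd (hinj _ _ h1) h.ne
        · exact hlater b hub' (Or.inr (hcl d c b h.symm hab h1 hrab (by rintro rfl; omega)))
  · exact ⟨d, Or.inr rfl, Or.inr ⟨hnear d hub' rfl, hub'⟩⟩

theorem exists_low_degree_edge {V E : Type} [Finite E]
    (ends : E → Sym2 V) (hloop : ∀ e, ¬ (ends e).IsDiag)
    {T : SimpleGraph V} {r : V → ℕ} (hT : IsElimOrdering T r)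
    (hle : SimpleGraph.fromEdgeSet (Set.range ends) ≤ T)
    (A : Set E) (hA : A.Nonempty) (D : ℕ)
    (hD : ∀ v : V, {e : E | e ∈ A ∧ v ∈ ends e}.ncard ≤ D) :
    ∃ e ∈ A, {f : E | f ∈ A ∧ (f = e ∨ (mLineSq ends).Adj e f)}.ncard ≤ 3 * D := by
  have hadj : ∀ g x y, ends g = s(x, y) → T.Adj x y := by
    intro g x y hg
    refine hle ?_
    rw [SimpleGraph.fromEdgeSet_adj]
    refine ⟨⟨g, hg⟩, fun h => hloop g ?_⟩
    rw [hg, h]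
    exact Sym2.mk_isDiag_iff.2 rfl
  have horient : ∀ e, ∃ a b, ends e = s(a, b) ∧ r a < r b := by
    intro e
    obtain ⟨a, b, hab⟩ : ∃ a b, ends e = s(a, b) := by
      induction h : ends e with
      | _ a b => exact ⟨a, b, rfl⟩
    have hne : r a ≠ r b := fun h => (hadj e a b hab).ne (hT.inj h)
    rcases lt_or_gt_of_ne hne with h | h
    · exact ⟨a, b, hab, h⟩
    · exact ⟨b, a, hab.trans Sym2.eq_swap, h⟩
  choose lo hi hends hlt using horient
  obtain ⟨e, heA, hmin⟩ := Set.exists_min_image A (fun e => r (hi e)) A.toFinite hA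
  obtain ⟨x, y, hxy⟩ := hT.width (hi e)
  refine ⟨e, heA, ?_⟩
  have hcover : {f : E | f ∈ A ∧ (f = e ∨ (mLineSq ends).Adj e f)} ⊆
      {f | f ∈ A ∧ hi e ∈ ends f} ∪ {f | f ∈ A ∧ x ∈ ends f} ∪ {f | f ∈ A ∧ y ∈ ends f} := by
    rintro f ⟨hfA, hf⟩
    obtain ⟨c, d, hc, hd, hcd⟩ : ∃ c d, c ∈ ends e ∧ d ∈ ends f ∧ (c = d ∨ T.Adj c d) := by
      rcases hf with rfl | hf
      · exact ⟨hi f, hi f, by simp [hends], by simp [hends], Or.inl rfl⟩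
      · rw [mLineSq, SimpleGraph.fromRel_adj] at hf
        rcases hf with ⟨-, (⟨z, h1, h2⟩ | ⟨z, w, h1, h2, g, hg⟩) |
          (⟨z, h1, h2⟩ | ⟨z, w, h1, h2, g, hg⟩)⟩
        · exact ⟨z, z, h1, h2, Or.inl rfl⟩
        · exact ⟨z, w, h1, h2, Or.inr (hadj g z w hg)⟩
        · exact ⟨z, z, h2, h1, Or.inl rfl⟩
        · exact ⟨w, z, h2, h1, Or.inr (hadj g z w hg).symm⟩
    rw [hends, Sym2.mem_iff] at hc hd
    obtain ⟨w, hw, hwu⟩ := touches_of_close hT (hadj e _ _ (hends e)) (hlt e)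
      (hadj f _ _ (hends f)) (hlt f) (hmin f hfA) hc.symm hd hcd
    have hwf : w ∈ ends f := by rw [hends, Sym2.mem_iff]; exact hw
    rcases hwu with rfl | ⟨h1, h2⟩
    · exact Or.inl (Or.inl ⟨hfA, hwf⟩)
    · rcases hxy w h1 h2 with rfl | rfl
      · exact Or.inl (Or.inr ⟨hfA, hwf⟩)
      · exact Or.inr ⟨hfA, hwf⟩
  have h1 := Set.ncard_le_ncard hcover (Set.toFinite _)
  have h2 := Set.ncard_union_le ({f | f ∈ A ∧ hi e ∈ ends f} ∪ {f | f ∈ A ∧ x ∈ ends f})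
    {f | f ∈ A ∧ y ∈ ends f}
  have h3 := Set.ncard_union_le {f | f ∈ A ∧ hi e ∈ ends f} {f | f ∈ A ∧ x ∈ ends f}
  have h4 := hD (hi e)
  have h5 := hD x
  have h6 := hD y
  omega

/-! ### Greedy colouring -/

/-- Greedy colouring of a degenerate graph: `P` is a hereditary property of vertex sets, each
nonempty set with `P` containing a vertex that has fewer than `k` neighbours in it. -/
theorem exists_greedy_coloring {E : Type} [Finite E] (L : SimpleGraph E) (k : ℕ) (P : Set E → Prop)
    (hsub : ∀ A B, B ⊆ A → P A → P B)
    (hlow : ∀ A : Set E, P A → A.Nonempty →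
      ∃ e ∈ A, {f : E | f ∈ A ∧ (f = e ∨ L.Adj e f)}.ncard ≤ k)
    (n : ℕ) : ∀ A : Set E, A.ncard = n → P A →
      ∃ c : E → ℕ, (∀ e ∈ A, c e < k) ∧ ∀ e ∈ A, ∀ f ∈ A, L.Adj e f → c e ≠ c f := by
  induction n with
  | zero =>
    intro A hA _
    rw [Set.ncard_eq_zero] at hA
    subst hA
    exact ⟨fun _ => 0, by simp, by simp⟩
  | succ n ih =>
    intro A hA hP
    obtain ⟨e, heA, he⟩ := hlow A hP (Set.nonempty_of_ncard_ne_zero (by omega))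
    obtain ⟨c, hck, hc⟩ := ih (A \ {e}) (by rw [Set.ncard_sdiff_singleton_of_mem heA]; omega)
      (hsub _ _ Set.sdiff_subset hP)
    let N : Set E := {f | f ∈ A ∧ L.Adj e f}
    have hN : N.ncard < k := by
      refine lt_of_lt_of_le (Set.ncard_lt_ncard ?_ (Set.toFinite _)) he
      refine ⟨fun f hf => ⟨hf.1, Or.inr hf.2⟩, fun h => ?_⟩
      exact (h (show e ∈ _ from ⟨heA, Or.inl rfl⟩)).2.ne rfl
    obtain ⟨m, hmk, hm⟩ : ∃ m ∈ Set.Iio k, m ∉ c '' N := by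
      refine Set.exists_mem_notMem_of_ncard_lt_ncard ?_ (Set.toFinite _)
      refine lt_of_le_of_lt (Set.ncard_image_le (Set.toFinite _)) (hN.trans_eq ?_)
      rw [Set.ncard_eq_toFinset_card']
      simp
    classical
    refine ⟨Function.update c e m, ?_, ?_⟩
    · intro f hf
      by_cases hfe : f = e
      · subst hfe
        simpa using hmk
      · rw [Function.update_of_ne hfe]
        exact hck f ⟨hf, hfe⟩
    · intro f hf g hg hfg
      by_cases hfe : f = e
      · subst hfe
        rw [Function.update_self, Function.update_of_ne hfg.ne']
        exact fun h => hm ⟨g, ⟨hg, hfg⟩, h.symm⟩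
      · by_cases hge : g = e
        · subst hge
          rw [Function.update_self, Function.update_of_ne hfe]
          exact fun h => hm ⟨f, ⟨hf, hfg.symm⟩, h⟩
        · rw [Function.update_of_ne hfe, Function.update_of_ne hge]
          exact hc f ⟨hf, hfe⟩ g ⟨hg, hge⟩ hfg

/-- For a `K₄`-minor-free multigraph `G` and a set `A` of its edges, if every vertex is
incident to at most `ΔA` edges of `A`, then the subgraph of `L(G)²` induced by `A` has a
proper vertex colouring with at most `3·ΔA` colours. -/
theorem stmt_8 {V E : Type} [Fintype V] [Fintype E]
    (ends : E → Sym2 V) (hloop : ∀ e, ¬ (ends e).IsDiag)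
    (hminor : ¬ HasCliqueMinor (SimpleGraph.fromEdgeSet (Set.range ends)) 4)
    (A : Set E) (ΔA : ℕ)
    (hΔA : ∀ v : V, {e : E | e ∈ A ∧ v ∈ ends e}.ncard ≤ ΔA) :
    ((mLineSq ends).induce A).Colorable (3 * ΔA) := by
  obtain ⟨T, r, hle, hT⟩ := exists_elimination_ordering _ V _ rfl hminor
  obtain ⟨c, hck, hc⟩ := exists_greedy_coloring (mLineSq ends) (3 * ΔA)
    (fun B => ∀ v : V, {e : E | e ∈ B ∧ v ∈ ends e}.ncard ≤ ΔA)
    (fun B C hCB hB v => (Set.ncard_le_ncard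
      (show {e : E | e ∈ C ∧ v ∈ ends e} ⊆ {e : E | e ∈ B ∧ v ∈ ends e} from
        fun e he => ⟨hCB he.1, he.2⟩) (Set.toFinite _)).trans (hB v))
    (fun B hB hne => exists_low_degree_edge ends hloop hT hle B hne ΔA hB) _ A rfl hΔA
  refine ⟨SimpleGraph.Coloring.mk (fun e => ⟨c e.1, hck e.1 e.2⟩) ?_⟩
  intro e f hef h
  exact hc e.1 e.2 f.1 f.2 (by simpa using hef) (congrArg Fin.val h)
end
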